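/- arXiv:1108.6218 — 9 statements merged into one kernel-verified Lean document; each statement's English description precedes it below -/
import Mathlib

section
/- Suppose α = r + sω + tω² with r, s, t ∈ ℚ satisfies α² = a − ω for some a ∈ ℚ. Then t ≠ 0, r = −s²/(2t), and the pair (x, y) = (s/t, 1/t) satisfies y² = x³ − m; that is, (s/t, 1/t) is an affine rational point on the elliptic curve E_m : y² = x³ − m. -/
theorem aux_cube (m : ℤ) (hm : ¬ ∃ k : ℤ, k ^ 3 = m) (q : ℚ) (hq : q ^ 3 = m) : False := by
  have hi : IsIntegral ℤ (q ^ 3) := by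
    rw [hq]; exact isIntegral_algebraMap (R := ℤ) (A := ℚ) (x := m)
  obtain ⟨k, hk⟩ := IsIntegrallyClosed.exists_algebraMap_eq_of_isIntegral_pow
    (R := ℤ) (K := ℚ) (n := 3) (by norm_num) hi
  apply hm
  refine ⟨k, ?_⟩
  have hk' : (k : ℚ) = q := by simpa using hk
  rw [← hk'] at hq
  exact_mod_cast hq

theorem aux_lin (m : ℤ) (hm : ¬ ∃ k : ℤ, k ^ 3 = m)
    (K : Type*) [Field K] [CharZero K] (ω : K) (hω : ω ^ 3 = (m : K))
    (A B : ℚ) (h : (A : K) + B * ω = 0) : B = 0 := by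
  by_contra hB
  have hB' : (B : K) ≠ 0 := by exact_mod_cast hB
  have e : ω = ((-A / B : ℚ) : K) := by
    push_cast
    field_simp
    linear_combination h
  rw [e] at hω
  exact aux_cube m hm (-A / B) (by exact_mod_cast hω)

theorem aux_quad (m : ℤ) (hm : ¬ ∃ k : ℤ, k ^ 3 = m)
    (K : Type*) [Field K] [CharZero K] (ω : K) (hω : ω ^ 3 = (m : K))
    (A B C : ℚ) (h : (A : K) + B * ω + C * ω ^ 2 = 0) : B = 0 ∧ C = 0 := by
  have hC : C = 0 := by
    by_contra hC
    have h1 : ((C ^ 2 * m - A * B : ℚ) : K) + ((A * C - B ^ 2 : ℚ) : K) * ω = 0 := by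
      push_cast
      linear_combination (C * ω - B) * h - C ^ 2 * hω
    have h2 := aux_lin m hm K ω hω _ _ h1
    rw [h2] at h1
    have h3 : C ^ 2 * m - A * B = 0 := by
      have : ((C ^ 2 * m - A * B : ℚ) : K) = 0 := by simpa using h1
      exact_mod_cast this
    refine aux_cube m hm (B / C) ?_
    field_simp
    linear_combination -C * h3 - B * h2
  subst hC
  exact ⟨aux_lin m hm K ω hω A B (by simpa using h), rfl⟩

/-- If `α = r + sω + tω²` satisfies `α² = a − ω`, then `t ≠ 0`,
`r = −s²/(2t)`, and `(s/t, 1/t)` is an affine rational point on `y² = x³ − m`. -/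
theorem point_of_binomial_square
    (m : ℤ) (hm : ¬ ∃ k : ℤ, k ^ 3 = m)
    (K : Type*) [Field K] [CharZero K] (hK : Module.finrank ℚ K = 3)
    (ω : K) (hω : ω ^ 3 = (m : K))
    (r s t a : ℚ)
    (h : ((r : K) + (s : K) * ω + (t : K) * ω ^ 2) ^ 2 = (a : K) - ω) :
    t ≠ 0 ∧ r = -s ^ 2 / (2 * t) ∧ (1 / t) ^ 2 = (s / t) ^ 3 - (m : ℚ) := by
  obtain ⟨h1, h2⟩ := aux_quad m hm K ω hω (r ^ 2 + 2 * s * t * m - a)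
    (2 * r * s + t ^ 2 * m + 1) (s ^ 2 + 2 * r * t) (by
      push_cast
      linear_combination h - (2 * s * t + t ^ 2 * ω) * hω)
  have ht : t ≠ 0 := by
    rintro rfl
    have hs : s = 0 := by simpa using h2
    subst hs
    norm_num at h1
  refine ⟨ht, ?_, ?_⟩
  · field_simp
    linear_combination h2
  · field_simp
    linear_combination t * h1 - s * h2
end

section
/- The map sending an affine rational point (x, y) of E_m to α = −x²/(2y) + (x/y)ω + (1/y)ω² is a bijection from the set of affine rational points of E_m (i.e. pairs (x,y) ∈ ℚ² with y² = x³ − m) onto the set S_m = {α ∈ K^× : α² = a − ω for some a ∈ ℚ}. -/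
theorem aux_noroot (m : ℤ) (hm : ¬ ∃ k : ℤ, k ^ 3 = m) (q : ℚ) : q ^ 3 ≠ (m : ℚ) := by
  intro h
  have hi : IsIntegral ℤ q := by
    apply IsIntegral.of_pow (n := 3) (by norm_num)
    rw [h]
    exact isIntegral_algebraMap (x := m)
  obtain ⟨k, hk⟩ := IsIntegrallyClosed.isIntegral_iff.mp hi
  apply hm
  refine ⟨k, ?_⟩
  rw [← hk] at h
  simp only [algebraMap_int_eq, eq_intCast] at h
  exact_mod_cast h

theorem aux_li (m : ℤ) (hm : ¬ ∃ k : ℤ, k ^ 3 = m)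
    (K : Type*) [Field K] [CharZero K]
    (ω : K) (hω : ω ^ 3 = (m : K)) :
    LinearIndependent ℚ (fun i : Fin 3 => ω ^ (i : ℕ)) := by
  have hirr : Irreducible (Polynomial.X ^ 3 - Polynomial.C (m : ℚ)) :=
    X_pow_sub_C_irreducible_of_prime Nat.prime_three (aux_noroot m hm)
  have hmin := minpoly.eq_of_irreducible_of_monic (x := ω) hirr (by simp [hω])
    (Polynomial.monic_X_pow_sub_C _ (by norm_num))
  have hd : (minpoly ℚ ω).natDegree = 3 := by
    rw [← hmin]; exact Polynomial.natDegree_X_pow_sub_C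
  have := linearIndependent_pow (K := ℚ) ω
  rw [hd] at this
  exact this

theorem aux_zero (m : ℤ) (hm : ¬ ∃ k : ℤ, k ^ 3 = m)
    (K : Type*) [Field K] [CharZero K]
    (ω : K) (hω : ω ^ 3 = (m : K)) (a b c : ℚ)
    (h : (a : K) + (b : K) * ω + (c : K) * ω ^ 2 = 0) : a = 0 ∧ b = 0 ∧ c = 0 := by
  have := Fintype.linearIndependent_iff.mp (aux_li m hm K ω hω) ![a, b, c]
    (by simpa [Fin.sum_univ_three, Rat.smul_def] using h)
  exact ⟨this 0, this 1, this 2⟩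

theorem aux_span (m : ℤ) (hm : ¬ ∃ k : ℤ, k ^ 3 = m)
    (K : Type*) [Field K] [CharZero K] (hK : Module.finrank ℚ K = 3)
    (ω : K) (hω : ω ^ 3 = (m : K)) (α : K) :
    ∃ a b c : ℚ, α = (a : K) + (b : K) * ω + (c : K) * ω ^ 2 := by
  have hs := (aux_li m hm K ω hω).span_eq_top_of_card_eq_finrank (by simp [hK])
  have hα : α ∈ Submodule.span ℚ (Set.range (fun i : Fin 3 => ω ^ (i : ℕ))) := by
    rw [hs]; trivial
  obtain ⟨c, hc⟩ := (Submodule.mem_span_range_iff_exists_fun ℚ).mp hα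
  refine ⟨c 0, c 1, c 2, ?_⟩
  rw [← hc]
  simp [Fin.sum_univ_three, Rat.smul_def]

/-- The map `(x, y) ↦ −x²/(2y) + (x/y)ω + (1/y)ω²` is a bijection from
the set of affine rational points of `E_m : y² = x³ − m` onto
`S_m = {α ∈ K^× : α² = a − ω for some a ∈ ℚ}`. -/
theorem bijection_points_binomial_squares
    (m : ℤ) (hm : ¬ ∃ k : ℤ, k ^ 3 = m)
    (K : Type*) [Field K] [CharZero K] (hK : Module.finrank ℚ K = 3)
    (ω : K) (hω : ω ^ 3 = (m : K)) :
    Set.BijOn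
      (fun p : ℚ × ℚ =>
        ((-p.1 ^ 2 / (2 * p.2) : ℚ) : K) + ((p.1 / p.2 : ℚ) : K) * ω
          + ((1 / p.2 : ℚ) : K) * ω ^ 2)
      {p : ℚ × ℚ | p.2 ^ 2 = p.1 ^ 3 - (m : ℚ)}
      {α : K | α ≠ 0 ∧ ∃ a : ℚ, α ^ 2 = (a : K) - ω} := by
  have hy : ∀ x y : ℚ, y ^ 2 = x ^ 3 - (m : ℚ) → y ≠ 0 := by
    rintro x y h rfl
    exact aux_noroot m hm x (by linarith)
  refine ⟨?_, ?_, ?_⟩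
  · rintro ⟨x, y⟩ h
    simp only [Set.mem_setOf_eq] at h ⊢
    have h0 := hy x y h
    refine ⟨?_, x ^ 4 / (4 * y ^ 2) + 2 * (x / y) * (1 / y) * m, ?_⟩
    · intro h1
      have := (aux_zero m hm K ω hω _ _ _ h1).2.2
      simp [h0] at this
    · have h0K : (y : K) ≠ 0 := by exact_mod_cast h0
      have hK' : (y : K) ^ 2 = (x : K) ^ 3 - (m : K) := by exact_mod_cast h
      push_cast
      field_simp
      rw [← hω] at hK' ⊢
      linear_combination (16 * ω) * hK'
  · rintro ⟨x, y⟩ h ⟨x', y'⟩ h' he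
    simp only [Set.mem_setOf_eq] at h h' he
    have h0 := hy x y h
    have h0' := hy x' y' h'
    obtain ⟨-, h2, h3⟩ := aux_zero m hm K ω hω
      (-x ^ 2 / (2 * y) - -x' ^ 2 / (2 * y')) (x / y - x' / y') (1 / y - 1 / y')
      (by push_cast at he ⊢; linear_combination he)
    have e : y = y' := by
      field_simp at h3
      linarith
    subst e
    have : x = x' := by
      field_simp at h2
      linarith
    rw [this]
  · rintro α ⟨-, a, ha⟩
    obtain ⟨A, B, C, rfl⟩ := aux_span m hm K hK ω hω α
    obtain ⟨-, h2, h3⟩ := aux_zero m hm K ω hω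
      (A ^ 2 + 2 * B * C * m - a) (2 * A * B + m * C ^ 2 + 1) (B ^ 2 + 2 * A * C)
      (by
        push_cast
        rw [← hω]
        linear_combination ha)
    have hC : C ≠ 0 := by
      rintro rfl
      have hB : B = 0 := by
        have : B ^ 2 = 0 := by linarith
        exact pow_eq_zero_iff (by norm_num) |>.mp this
      subst hB
      norm_num at h2
    refine ⟨(B / C, 1 / C), ?_, ?_⟩
    · simp only [Set.mem_setOf_eq]
      field_simp
      linear_combination C * h2 - B * h3
    · have e1 : -(B / C) ^ 2 / (2 * (1 / C)) = A := by
        field_simp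
        linear_combination -h3
      have e2 : B / C / (1 / C) = B := by field_simp
      have e3 : 1 / (1 / C) = C := by field_simp
      simp only [e1, e2, e3]
end

section
/- If the elliptic curve E_m : y² = x³ − m has no rational point except the point at infinity, then there exists no α ∈ K^× and a ∈ ℚ with α² = a − ω. -/
open Polynomial in
theorem norm_aux (m : ℤ) (hm : ¬ ∃ k : ℤ, k ^ 3 = m)
    (K : Type*) [Field K] [CharZero K] (hK : Module.finrank ℚ K = 3)
    (ω : K) (hω : ω ^ 3 = (m : K)) (a : ℚ) :
    Algebra.norm ℚ (algebraMap ℚ K a - ω) = a ^ 3 - m := by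
  have : FiniteDimensional ℚ K := Module.finite_of_finrank_pos (by omega)
  have hirr : Irreducible (X ^ 3 - C (m : ℚ) : ℚ[X]) := by
    apply X_pow_sub_C_irreducible_of_prime Nat.prime_three
    intro b hb
    have hint : IsIntegral ℤ (b ^ 3) := by
      rw [hb]; exact isIntegral_algebraMap (R := ℤ) (A := ℚ) (x := m)
    obtain ⟨k, hk⟩ := IsIntegrallyClosed.exists_algebraMap_eq_of_isIntegral_pow
      (R := ℤ) (K := ℚ) (by norm_num : 0 < 3) hint
    apply hm
    refine ⟨k, ?_⟩
    rw [← hk] at hb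
    simp only [eq_intCast] at hb
    exact_mod_cast hb
  have hmon : (X ^ 3 - C (m : ℚ) : ℚ[X]).Monic := monic_X_pow_sub_C _ (by norm_num)
  have hmin : X ^ 3 - C (m : ℚ) = minpoly ℚ ω :=
    minpoly.eq_of_irreducible_of_monic hirr (by simp [hω]) hmon
  have hch : LinearMap.charpoly (Algebra.lmul ℚ K ω) = X ^ 3 - C (m : ℚ) := by
    apply Polynomial.eq_of_monic_of_dvd_of_natDegree_le hmon (LinearMap.charpoly_monic _)
    · rw [hmin]
      apply minpoly.dvd
      have h := LinearMap.aeval_self_charpoly (Algebra.lmul ℚ K ω)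
      rw [Polynomial.aeval_algHom_apply] at h
      exact Algebra.lmul_injective (R := ℚ) (by simpa using h)
    · rw [LinearMap.charpoly_natDegree, hK, natDegree_X_pow_sub_C]
  have h := LinearMap.eval_charpoly (Algebra.lmul ℚ K ω) a
  rw [hch] at h
  rw [Algebra.norm_apply, map_sub, AlgHom.commutes]
  rw [← h]; simp

/-- If `E_m : y² = x³ − m` has no rational point other than the point at
infinity, then no `α ∈ K^×` satisfies `α² = a − ω` with `a ∈ ℚ`. -/
theorem no_binomial_square_of_no_point
    (m : ℤ) (hm : ¬ ∃ k : ℤ, k ^ 3 = m)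
    (K : Type*) [Field K] [CharZero K] (hK : Module.finrank ℚ K = 3)
    (ω : K) (hω : ω ^ 3 = (m : K))
    (hE : ¬ ∃ x y : ℚ, y ^ 2 = x ^ 3 - (m : ℚ)) :
    ¬ ∃ (α : K) (a : ℚ), α ≠ 0 ∧ α ^ 2 = (a : K) - ω := by
  rintro ⟨α, a, -, h⟩
  refine hE ⟨a, Algebra.norm ℚ α, ?_⟩
  rw [← norm_aux m hm K hK ω hω a, ← map_pow, h]
  simp
end

section
/- For a ∈ ℚ, the element a − ω is a square in K^× if and only if there exists a rational point P on E_m such that 2P (the double of P in the group law of E_m(ℚ)) is an affine point with x-coordinate equal to a. In that case, writing 2P = (a, y'), the norm satisfies N_{K/ℚ}(a − ω) = a³ − m = y'². -/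
/-- The elliptic curve `E_m : y² = x³ − m` over `ℚ` in Weierstrass form. -/
def Wm (m : ℤ) : WeierstrassCurve.Affine ℚ := ⟨0, 0, 0, 0, -(m : ℚ)⟩

theorem aux_irr (m : ℤ) (hm : ¬ ∃ k : ℤ, k ^ 3 = m) (b : ℚ) : b ^ 3 ≠ (m : ℚ) := by
  intro hb
  have hi : IsIntegral ℤ (b ^ 3) := by
    rw [hb]; exact isIntegral_algebraMap (R := ℤ) (A := ℚ) (x := m)
  obtain ⟨k, hk⟩ := IsIntegrallyClosed.exists_algebraMap_eq_of_isIntegral_pow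
    (R := ℤ) (K := ℚ) (n := 3) (by norm_num) hi
  apply hm
  refine ⟨k, ?_⟩
  have : (k : ℚ) = b := by simpa using hk
  rw [← this] at hb
  exact_mod_cast hb

theorem aux_basis (m : ℤ) (hm : ¬ ∃ k : ℤ, k ^ 3 = m)
    (K : Type*) [Field K] [CharZero K] (hK : Module.finrank ℚ K = 3)
    (ω : K) (hω : ω ^ 3 = (m : K)) :
    ∃ b : Module.Basis (Fin 3) ℚ K, ∀ i, b i = ω ^ (i : ℕ) := by
  have hirr : Irreducible (Polynomial.X ^ 3 - Polynomial.C (m : ℚ)) :=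
    X_pow_sub_C_irreducible_of_prime Nat.prime_three (aux_irr m hm)
  have hmin : minpoly ℚ ω = Polynomial.X ^ 3 - Polynomial.C (m : ℚ) := by
    symm
    apply minpoly.eq_of_irreducible_of_monic hirr
    · simp [hω]
    · exact Polynomial.monic_X_pow_sub_C _ (by norm_num)
  have hdeg : (minpoly ℚ ω).natDegree = 3 := by
    rw [hmin]; exact Polynomial.natDegree_X_pow_sub_C
  have hli := linearIndependent_pow (K := ℚ) ω
  rw [hdeg] at hli
  exact ⟨basisOfLinearIndependentOfCardEqFinrank hli (by simp [hK]), by simp⟩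

theorem aux_norm (m : ℤ)
    (K : Type*) [Field K] [CharZero K]
    (ω : K) (hω : ω ^ 3 = (m : K)) (b : Module.Basis (Fin 3) ℚ K)
    (hb : ∀ i, b i = ω ^ (i : ℕ)) (a : ℚ) :
    Algebra.norm ℚ ((a : K) - ω) = a ^ 3 - (m : ℚ) := by
  have h : Algebra.leftMulMatrix b ((a : K) - ω) = !![a, 0, -(m : ℚ); -1, a, 0; 0, -1, a] := by
    rw [Algebra.leftMulMatrix_apply, ← LinearEquiv.eq_symm_apply, LinearMap.toMatrix_symm]
    apply b.ext
    intro i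
    rw [Matrix.toLin_self]
    fin_cases i <;> simp [Fin.sum_univ_three, hb, Algebra.smul_def] <;>
      first | (ring1) | linear_combination -hω | linear_combination hω
  rw [Algebra.norm_eq_matrix_det b, h, Matrix.det_fin_three]
  simp
  ring

/-- `a − ω` is a square in `K^×` iff `a = x_{2P}` for some
`P ∈ E_m(ℚ)`; in that case, writing `2P = (a, y')`, one has
`N_{K/ℚ}(a − ω) = a³ − m = y'²`. -/
theorem binomial_square_iff_double_point
    (m : ℤ) (hm : ¬ ∃ k : ℤ, k ^ 3 = m)
    (K : Type*) [Field K] [CharZero K] (hK : Module.finrank ℚ K = 3)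
    (ω : K) (hω : ω ^ 3 = (m : K))
    (a : ℚ) :
    ((∃ α : K, α ≠ 0 ∧ α ^ 2 = (a : K) - ω) ↔
      ∃ (P : (Wm m).Point) (y' : ℚ) (h : (Wm m).Nonsingular a y'),
        2 • P = WeierstrassCurve.Affine.Point.some a y' h) ∧
    ∀ (P : (Wm m).Point) (y' : ℚ) (h : (Wm m).Nonsingular a y'),
      2 • P = WeierstrassCurve.Affine.Point.some a y' h →
        Algebra.norm ℚ ((a : K) - ω) = a ^ 3 - (m : ℚ) ∧
        a ^ 3 - (m : ℚ) = y' ^ 2 := by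
  obtain ⟨b, hb⟩ := aux_basis m hm K hK ω hω
  have hlin : ∀ u v w : ℚ, (u : K) + v * ω + w * ω ^ 2 = 0 → u = 0 ∧ v = 0 ∧ w = 0 := by
    intro u v w h
    have := Fintype.linearIndependent_iff.1 b.linearIndependent ![u, v, w]
      (by simpa [Fin.sum_univ_three, hb, Algebra.smul_def] using h)
    exact ⟨this 0, this 1, this 2⟩
  refine ⟨⟨?_, ?_⟩, ?_⟩
  · rintro ⟨α, -, hα⟩
    obtain ⟨u, v, w, rfl⟩ : ∃ u v w : ℚ, α = (u : K) + v * ω + w * ω ^ 2 := by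
      refine ⟨b.repr α 0, b.repr α 1, b.repr α 2, ?_⟩
      conv_lhs => rw [← b.sum_repr α]
      simp [Fin.sum_univ_three, hb, Algebra.smul_def]
    obtain ⟨h0, h1, h2⟩ := hlin (u ^ 2 + 2 * v * w * m - a) (2 * u * v + w ^ 2 * m + 1)
      (v ^ 2 + 2 * u * w) (by
        push_cast
        linear_combination hα - (2 * v * w + w ^ 2 * ω) * hω)
    have hw : w ≠ 0 := by
      rintro rfl
      have hv : v = 0 := by simpa using h2
      subst hv
      norm_num at h1
    have hc : w = v ^ 3 - m * w ^ 3 := by linear_combination w * h1 - v * h2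
    have hu : u = - v ^ 2 / (2 * w) := by field_simp; linear_combination h2
    have hns : (Wm m).Nonsingular (v / w) (-1 / w) := by
      rw [WeierstrassCurve.Affine.nonsingular_iff, WeierstrassCurve.Affine.equation_iff]
      refine ⟨?_, Or.inr ?_⟩
      · simp only [Wm]
        field_simp
        linear_combination hc
      · simp only [Wm]
        intro h
        field_simp at h
        norm_num at h
    have hy : (-1 / w) ≠ (Wm m).negY (v / w) (-1 / w) := by
      simp only [Wm, WeierstrassCurve.Affine.negY]
      intro h
      field_simp at h
      norm_num at h
    have hx : (Wm m).addX (v / w) (v / w) ((Wm m).slope (v / w) (v / w) (-1 / w) (-1 / w)) = a := by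
      rw [WeierstrassCurve.Affine.slope_of_Y_ne rfl hy]
      have : a = u ^ 2 + 2 * v * w * m := by linear_combination -h0
      rw [this, hu]
      simp only [Wm, WeierstrassCurve.Affine.negY, WeierstrassCurve.Affine.addX]
      have e : (-1 / w - (-(-1 / w) - 0 * (v / w) - 0)) = -2 / w := by ring
      rw [e]
      field_simp
      linear_combination (-8 * v) * hc
    have hs := WeierstrassCurve.Affine.Point.add_self_of_Y_ne (h₁ := hns) hy
    rw [← two_nsmul] at hs
    subst hx
    exact ⟨_, _, _, hs⟩
  · rintro ⟨P, y', h, hP⟩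
    have hne : (a : K) - ω ≠ 0 := by
      intro h0
      have := hlin a (-1) 0 (by push_cast; linear_combination h0)
      norm_num at this
    rw [two_nsmul] at hP
    rcases P with _ | ⟨x, y, hxy⟩
    · exact absurd hP (by
        change (0 + 0 : (Wm m).Point) ≠ _
        rw [add_zero]; exact (WeierstrassCurve.Affine.Point.some_ne_zero h).symm)
    · by_cases hy : y = (Wm m).negY x y
      · rw [WeierstrassCurve.Affine.Point.add_self_of_Y_eq hy] at hP
        exact absurd hP.symm (WeierstrassCurve.Affine.Point.some_ne_zero h)
      · rw [WeierstrassCurve.Affine.Point.add_self_of_Y_ne hy] at hP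
        have hX := (WeierstrassCurve.Affine.Point.some.inj hP).1
        rw [WeierstrassCurve.Affine.slope_of_Y_ne rfl hy] at hX
        have heq := (WeierstrassCurve.Affine.equation_iff _ _).1 hxy.1
        simp only [Wm, WeierstrassCurve.Affine.negY, WeierstrassCurve.Affine.addX] at hX heq hy
        have hy0 : y ≠ 0 := by
          rintro rfl
          simp at hy
        have e : y - (-y - 0 * x - 0) = 2 * y := by ring
        rw [e] at hX
        have ha : a * (4 * y ^ 2) = x ^ 4 + 8 * m * x := by
          rw [← hX]; field_simp
          linear_combination (-32 * x) * heq
        have haK : (a : K) * (4 * y ^ 2) = x ^ 4 + 8 * m * x := by exact_mod_cast ha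
        have heK : (y : K) ^ 2 = x ^ 3 - m := by
          have : y ^ 2 = x ^ 3 - m := by linear_combination heq
          exact_mod_cast this
        have hyK : (y : K) ≠ 0 := by exact_mod_cast hy0
        have hsq : (((x : K) ^ 2 - 2 * x * ω - 2 * ω ^ 2) / (2 * y)) ^ 2 = (a : K) - ω := by
          field_simp
          linear_combination (8 * x + 4 * ω) * hω - haK + 4 * ω * heK
        refine ⟨_, ?_, hsq⟩
        intro h0
        rw [h0] at hsq
        apply hne
        rw [← hsq]; norm_num
  · intro P y' h _
    refine ⟨aux_norm m K ω hω b hb a, ?_⟩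
    have heq := (WeierstrassCurve.Affine.equation_iff _ _).1 h.1
    simp only [Wm] at heq
    linear_combination -heq
end

section
/- Let b be a nonzero rational number. Suppose α = r + sω + tω² with r, s, t ∈ ℚ satisfies α² = a − bω for some a ∈ ℚ. Then t ≠ 0 and the pair (x, y) = (bs/t, b²/t) satisfies y² = x³ − mb³; that is, it is an affine rational point on the quadratic twist curve E'_m : y² = x³ − mb³. -/
theorem no_rat_cube (m : ℤ) (hm : ¬ ∃ k : ℤ, k ^ 3 = m) (c : ℚ) : c ^ 3 ≠ (m : ℚ) := by
  intro h
  have hi : IsIntegral ℤ c := by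
    apply IsIntegral.of_pow (n := 3) (by norm_num)
    rw [h]
    exact isIntegral_algebraMap (R := ℤ) (A := ℚ) (x := m)
  obtain ⟨k, hk⟩ := IsIntegrallyClosed.isIntegral_iff.mp hi
  apply hm
  refine ⟨k, ?_⟩
  have hk' : (k : ℚ) = c := hk
  rw [← hk'] at h
  exact_mod_cast h

theorem lin_aux (m : ℤ) (hm : ¬ ∃ k : ℤ, k ^ 3 = m)
    (K : Type*) [Field K] [CharZero K] (ω : K) (hω : ω ^ 3 = (m : K))
    (p q : ℚ) (h : (p : K) + q * ω = 0) : q = 0 := by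
  by_contra hq
  have hq' : (q : K) ≠ 0 := by exact_mod_cast hq
  have h1 : ω = ((-p / q : ℚ) : K) := by
    push_cast
    field_simp
    linear_combination h
  rw [h1] at hω
  exact no_rat_cube m hm (-p / q) (by exact_mod_cast hω)

theorem quad_aux (m : ℤ) (hm : ¬ ∃ k : ℤ, k ^ 3 = m)
    (K : Type*) [Field K] [CharZero K] (ω : K) (hω : ω ^ 3 = (m : K))
    (p q u : ℚ) (h : (p : K) + q * ω + u * ω ^ 2 = 0) : q = 0 ∧ u = 0 := by
  have hu : u = 0 := by
    by_contra hu
    have h2 : ((u ^ 2 * m - p * q : ℚ) : K) + ((p * u - q ^ 2 : ℚ) : K) * ω = 0 := by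
      push_cast
      linear_combination (u * ω - q) * h - u ^ 2 * hω
    have h3 := lin_aux m hm K ω hω _ _ h2
    rw [h3] at h2
    have h4 : u ^ 2 * m - p * q = 0 := by
      have : ((u ^ 2 * m - p * q : ℚ) : K) = 0 := by simpa using h2
      exact_mod_cast this
    apply no_rat_cube m hm (q / u)
    field_simp
    linear_combination (-u) * h4 - q * h3
  subst hu
  exact ⟨lin_aux m hm K ω hω p q (by simpa using h), rfl⟩

/-- If `α = r + sω + tω²` satisfies `α² = a − bω` with `b ≠ 0`, then
`t ≠ 0` and `(bs/t, b²/t)` is an affine rational point on `y² = x³ − mb³`. -/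
theorem twist_point_of_binomial_square
    (m : ℤ) (hm : ¬ ∃ k : ℤ, k ^ 3 = m)
    (K : Type*) [Field K] [CharZero K] (hK : Module.finrank ℚ K = 3)
    (ω : K) (hω : ω ^ 3 = (m : K))
    (b : ℚ) (hb : b ≠ 0) (r s t a : ℚ)
    (h : ((r : K) + (s : K) * ω + (t : K) * ω ^ 2) ^ 2 = (a : K) - (b : K) * ω) :
    t ≠ 0 ∧ (b ^ 2 / t) ^ 2 = (b * s / t) ^ 3 - (m : ℚ) * b ^ 3 := by
  obtain ⟨h1, h2⟩ := quad_aux m hm K ω hω (r ^ 2 + 2 * s * t * m - a)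
    (2 * r * s + t ^ 2 * m + b) (s ^ 2 + 2 * r * t) (by
      push_cast
      linear_combination h - (2 * s * t + t ^ 2 * ω) * hω)
  have ht : t ≠ 0 := by
    rintro rfl
    have hs : s = 0 := by simpa using h2
    subst hs
    exact hb (by simpa using h1)
  refine ⟨ht, ?_⟩
  have h3 : b * t = s ^ 3 - m * t ^ 3 := by
    linear_combination t * h1 - s * h2
  field_simp
  linear_combination h3
end

section
/- Let m be a cubefree integer with m ≢ 0 (mod 9), m ≢ 1 (mod 9) and m ≢ −1 (mod 9), and suppose m is not a perfect cube. Let (x, y) be an affine rational point on E_m : y² = x³ − m, and write x = a/e² with coprime integers a and e. Then there exists an ideal 𝔞 of O_K such that (a − e²ω)O_K = 𝔞²; in particular, the class of 𝔞 in Cl(K) has order dividing 2. -/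
open NumberField

open UniqueFactorizationMonoid in
lemma sq_of_even_count {R : Type*} [CommRing R] [IsDedekindDomain R] [DecidableEq (Ideal R)]
    (I : Ideal R) (hI : I ≠ 0)
    (h : ∀ P : Ideal R, P.IsPrime → P ≠ ⊥ → Even ((normalizedFactors I).count P)) :
    ∃ J : Ideal R, I = J ^ 2 := by
  classical
  set s := normalizedFactors I with hs
  refine ⟨(∑ P ∈ s.toFinset, (s.count P / 2) • ({P} : Multiset (Ideal R))).prod, ?_⟩
  rw [← Multiset.prod_nsmul, ← Finset.sum_nsmul]
  have h1 : ∑ P ∈ s.toFinset, 2 • ((s.count P / 2) • ({P} : Multiset (Ideal R))) = s := by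
    conv_rhs => rw [← Multiset.toFinset_sum_count_nsmul_eq s]
    apply Finset.sum_congr rfl
    intro P hP
    have hP' : Prime P := prime_of_normalized_factor P (Multiset.mem_toFinset.1 hP)
    have := h P (Ideal.isPrime_of_prime hP') hP'.ne_zero
    rw [← mul_nsmul', Nat.two_mul_div_two_of_even this]
  rw [h1]
  exact (associated_iff_eq.mp (prod_normalizedFactors hI)).symm

open UniqueFactorizationMonoid in
lemma mem_pow_iff_count {R : Type*} [CommRing R] [IsDedekindDomain R] [DecidableEq (Ideal R)]
    (P : Ideal R) (hP : P.IsPrime) (hP0 : P ≠ ⊥) (x : R) (hx : x ≠ 0) (n : ℕ) :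
    x ∈ P ^ n ↔ n ≤ (normalizedFactors (Ideal.span {x})).count P := by
  have hx' : Ideal.span {x} ≠ 0 := by simpa using hx
  have hPp : Prime P := Ideal.prime_of_isPrime hP0 hP
  rw [← Ideal.span_singleton_le_iff_mem, ← Ideal.dvd_iff_le,
    pow_dvd_iff_le_emultiplicity,
    emultiplicity_eq_count_normalizedFactors hPp.irreducible hx', normalize_eq]
  exact_mod_cast Iff.rfl

open UniqueFactorizationMonoid in
lemma count_mul' {R : Type*} [CommRing R] [IsDedekindDomain R] [DecidableEq (Ideal R)]
    (P : Ideal R) (x y : R) (hx : x ≠ 0) (hy : y ≠ 0) :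
    (normalizedFactors (Ideal.span {x * y})).count P =
    (normalizedFactors (Ideal.span {x})).count P + (normalizedFactors (Ideal.span {y})).count P := by
  rw [← Ideal.span_singleton_mul_span_singleton, normalizedFactors_mul (by simpa using hx)
    (by simpa using hy), Multiset.count_add]

lemma zmod9_aux : ∀ a e m : ZMod 9, a ^ 3 = m * e ^ 6 → 3 * e ≠ 0 → m = 0 ∨ m = 1 ∨ m = -1 := by
  decide

/-- For cubefree `m ≢ 0, ±1 (mod 9)` and an affine rational point `(x,y)`
on `y² = x³ − m` with `x = a/e²` in lowest terms, the ideal `(a − e²ω)` of `O_K` is the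
square of an ideal `𝔞`, whose class in `Cl(K)` has order dividing 2. -/
theorem ideal_square_of_point
    (m : ℤ) (hm : ¬ ∃ k : ℤ, k ^ 3 = m) (hcf : ∀ d : ℤ, d ^ 3 ∣ m → IsUnit d)
    (h9 : (m : ZMod 9) ≠ 0 ∧ (m : ZMod 9) ≠ 1 ∧ (m : ZMod 9) ≠ -1)
    (K : Type*) [Field K] [NumberField K] (hK : Module.finrank ℚ K = 3)
    (ω : 𝓞 K) (hω : ω ^ 3 = (m : 𝓞 K))
    (x y : ℚ) (hxy : y ^ 2 = x ^ 3 - (m : ℚ))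
    (a e : ℤ) (he : e ≠ 0) (hx : x = (a : ℚ) / (e : ℚ) ^ 2) (hae : IsCoprime a e) :
    ∃ 𝔞 : Ideal (𝓞 K),
      Ideal.span {(a : 𝓞 K) - (e : 𝓞 K) ^ 2 * ω} = 𝔞 ^ 2 ∧
      ∀ h0 : 𝔞 ≠ 0,
        (ClassGroup.mk0 ⟨𝔞, mem_nonZeroDivisors_of_ne_zero h0⟩) ^ 2 = 1 := by
  classical
  obtain ⟨b, hb⟩ : ∃ b : ℤ, b ^ 2 = a ^ 3 - m * e ^ 6 := by
    have heq : (e : ℚ) ≠ 0 := by exact_mod_cast he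
    have h1 : IsSquare (((a ^ 3 - m * e ^ 6 : ℤ)) : ℚ) := by
      refine ⟨y * e ^ 3, ?_⟩
      have : y * e ^ 3 * (y * e ^ 3) = y ^ 2 * e ^ 6 := by ring
      rw [this, hxy, hx]
      push_cast
      field_simp
    rw [Rat.isSquare_intCast_iff] at h1
    obtain ⟨b, hb⟩ := h1
    exact ⟨b, by rw [hb]; ring⟩
  have hb0 : b ≠ 0 := by
    rintro rfl
    have h1 : e ∣ a ^ 3 := ⟨m * e ^ 5, by linarith⟩
    have h2 : IsUnit e := (hae.pow_left (m := 3)).isUnit_of_dvd' h1 dvd_rfl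
    apply hm
    refine ⟨a, ?_⟩
    rcases Int.isUnit_iff.mp h2 with h | h <;> subst h <;> linarith
  set α : 𝓞 K := (a : 𝓞 K) - (e : 𝓞 K) ^ 2 * ω with hα
  set β : 𝓞 K := (a : 𝓞 K) ^ 2 + a * (e : 𝓞 K) ^ 2 * ω + e ^ 4 * ω ^ 2 with hβ
  have hbK : (b : 𝓞 K) ≠ 0 := by exact_mod_cast hb0
  have hαβ : α * β = b * b := by
    have : (b : 𝓞 K) ^ 2 = a ^ 3 - m * e ^ 6 := by exact_mod_cast congrArg (Int.cast : ℤ → 𝓞 K) hb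
    rw [← pow_two, this, ← hω, hα, hβ]; ring
  have hα0 : α ≠ 0 := by
    intro h; rw [h, zero_mul] at hαβ; exact hbK (by simpa using hαβ.symm)
  have hβ0 : β ≠ 0 := by
    intro h; rw [h, mul_zero] at hαβ; exact hbK (by simpa using hαβ.symm)
  have hm0 : m ≠ 0 := by rintro rfl; exact hm ⟨0, by norm_num⟩
  have hω0 : ω ≠ 0 := by
    rintro rfl
    apply hm0
    have : (m : 𝓞 K) = 0 := by rw [← hω]; ring
    exact_mod_cast this
  obtain ⟨J, hJ⟩ : ∃ J : Ideal (𝓞 K), Ideal.span {α} = J ^ 2 := by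
    apply sq_of_even_count _ (by simpa using hα0)
    intro P hP hP0
    have hv := fun (x : 𝓞 K) (hx : x ≠ 0) n => mem_pow_iff_count P hP hP0 x hx n
    have hmul := count_mul' P (R := 𝓞 K)
    set v : 𝓞 K → ℕ := fun x =>
      (UniqueFactorizationMonoid.normalizedFactors (Ideal.span {x})).count P with hvdef
    change ∀ x y : 𝓞 K, x ≠ 0 → y ≠ 0 → v (x * y) = v x + v y at hmul
    change ∀ x : 𝓞 K, x ≠ 0 → ∀ n, x ∈ P ^ n ↔ n ≤ v x at hv
    change Even (v α)
    have hv0 : ∀ x : 𝓞 K, x ≠ 0 → x ∉ P → v x = 0 := by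
      intro x hx hxP
      by_contra h
      exact hxP (by simpa using (hv x hx 1).2 (by omega))
    have hsum : v α + v β = v b + v b := by
      rw [← hmul _ _ hα0 hβ0, ← hmul _ _ hbK hbK, hαβ]
    by_cases hβP : β ∈ P
    swap
    · rw [hv0 β hβ0 hβP] at hsum
      exact ⟨v b, by omega⟩
    by_cases hαP : α ∈ P
    swap
    · rw [hv0 α hα0 hαP]; exact Even.zero
    obtain ⟨p, hp, hpP⟩ : ∃ p : ℤ, Prime p ∧ ∀ n : ℤ, (n : 𝓞 K) ∈ P ↔ p ∣ n := by
      have hbP : (b : 𝓞 K) ∈ P := by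
        have : (b : 𝓞 K) * b ∈ P := hαβ ▸ P.mul_mem_right _ hαP
        exact (hP.mem_or_mem this).elim id id
      let Q := P.comap (algebraMap ℤ (𝓞 K))
      have hQ : Q.IsPrime := hP.comap _
      have hmem : ∀ n : ℤ, n ∈ Q ↔ (n : 𝓞 K) ∈ P := fun n => by
        simp [Q, Ideal.mem_comap]
      have hQ0 : Q ≠ ⊥ := by
        intro h
        have := (hmem b).2 hbP
        rw [h] at this
        exact hb0 (by simpa using this)
      refine ⟨Submodule.IsPrincipal.generator Q,
        Submodule.IsPrincipal.prime_generator_of_isPrime Q hQ0, fun n => ?_⟩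
      rw [← hmem, Submodule.IsPrincipal.mem_iff_generator_dvd]
    have hbp : p ∣ b := by
      rw [← hpP]
      have : (b : 𝓞 K) * b ∈ P := hαβ ▸ P.mul_mem_right _ hαP
      exact (hP.mem_or_mem this).elim id id
    have hep : ¬ p ∣ e := by
      intro h
      have h1 : p ∣ a ^ 3 := by
        have : a ^ 3 = b ^ 2 + m * e ^ 6 := by linarith
        rw [this]
        exact dvd_add (dvd_pow hbp two_ne_zero) (Dvd.dvd.mul_left (dvd_pow h (by norm_num)) _)
      exact hp.not_isUnit (hae.isUnit_of_dvd' (hp.dvd_of_dvd_pow h1) h)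
    have heP : (e : 𝓞 K) ∉ P := fun h => hep ((hpP e).1 h)
    have h3P : ((3 : ℤ) : 𝓞 K) ∉ P := by
      rw [hpP]
      intro h
      have h3p : (3 : ℤ) ∣ p := ((hp.associated_of_dvd Int.prime_three h).symm).dvd
      have h3e : ¬ (3 : ℤ) ∣ e := fun h' => hep (h.trans h')
      have h3b := h3p.trans hbp
      have := zmod9_aux a e m ?_ ?_
      · tauto
      · obtain ⟨c, rfl⟩ := h3b
        have h5 : ((a ^ 3 - m * e ^ 6 : ℤ) : ZMod 9) = 0 := by
          rw [← hb]
          exact (ZMod.intCast_zmod_eq_zero_iff_dvd _ 9).2 ⟨c ^ 2, by push_cast; ring⟩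
        push_cast at h5
        exact sub_eq_zero.1 h5
      · intro h5
        have h6 : ((3 * e : ℤ) : ZMod 9) = 0 := by push_cast; exact h5
        rw [ZMod.intCast_zmod_eq_zero_iff_dvd] at h6
        push_cast at h6
        omega
    have haP : (a : 𝓞 K) ∈ P := by
      have h1 : ((3 : ℤ) : 𝓞 K) * (a : 𝓞 K) ^ 2 ∈ P := by
        have : ((3 : ℤ) : 𝓞 K) * (a : 𝓞 K) ^ 2 = β + (2 * a + e ^ 2 * ω) * α := by
          rw [hα, hβ]; push_cast; ring
        rw [this]
        exact P.add_mem hβP (P.mul_mem_left _ hαP)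
      exact hP.mem_of_pow_mem _ ((hP.mem_or_mem h1).resolve_left h3P)
    have hωP : ω ∈ P := by
      have h1 : (e : 𝓞 K) ^ 2 * ω ∈ P := by
        have : (e : 𝓞 K) ^ 2 * ω = a - α := by rw [hα]; ring
        rw [this]; exact P.sub_mem haP hαP
      exact (hP.mem_or_mem h1).resolve_left (fun h => heP (hP.mem_of_pow_mem _ h))
    have hap : p ∣ a := (hpP a).1 haP
    have hcop : IsCoprime p e := hp.coprime_iff_not_dvd.2 hep
    obtain ⟨u, hu⟩ : p ^ 2 ∣ m := by
      have h1 : p ^ 2 ∣ m * e ^ 6 := by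
        have : m * e ^ 6 = a ^ 3 - b ^ 2 := by linarith
        rw [this]
        exact dvd_sub ((pow_dvd_pow p (by norm_num)).trans (pow_dvd_pow_of_dvd hap 3))
          (pow_dvd_pow_of_dvd hbp 2)
      exact (hcop.pow (m := 2) (n := 6)).dvd_of_dvd_mul_right h1
    have hup : ¬ p ∣ u := by
      rintro ⟨w, rfl⟩
      exact hp.not_isUnit (hcf p ⟨w, by rw [hu]; ring⟩)
    have huP : (u : 𝓞 K) ∉ P := fun h => hup ((hpP u).1 h)
    have hp0 : (p : 𝓞 K) ≠ 0 := by exact_mod_cast hp.ne_zero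
    have hu0 : (u : 𝓞 K) ≠ 0 := by rintro h; exact huP (h ▸ P.zero_mem)
    have heK : (e : 𝓞 K) ≠ 0 := by exact_mod_cast he
    have hkey : 3 * v ω = 2 * v p := by
      have h1 : ω * (ω * ω) = p * (p * u) := by
        have : (m : 𝓞 K) = p ^ 2 * u := by rw [hu]; push_cast; ring
        linear_combination hω + this
      have h2 := congrArg v h1
      rw [hmul _ _ hω0 (mul_ne_zero hω0 hω0), hmul _ _ hω0 hω0,
        hmul _ _ hp0 (mul_ne_zero hp0 hu0), hmul _ _ hp0 hu0, hv0 _ hu0 huP] at h2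
      omega
    have hpos : 1 ≤ v ω := (hv ω hω0 1).1 (by simpa using hωP)
    have haPk : (a : 𝓞 K) ∈ P ^ (v ω + 1) := by
      obtain ⟨c, hc⟩ := hap
      have h1 : (p : 𝓞 K) ∈ P ^ (v ω + 1) := (hv _ hp0 _).2 (by omega)
      rw [hc]; push_cast
      exact Ideal.mul_mem_right _ _ h1
    have hve : v ((e : 𝓞 K) ^ 2 * ω) = v ω := by
      rw [hmul _ _ (pow_ne_zero 2 heK) hω0,
        hv0 _ (pow_ne_zero 2 heK) (fun h => heP (hP.mem_of_pow_mem _ h)), zero_add]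
    have he0 : (e : 𝓞 K) ^ 2 * ω ≠ 0 := mul_ne_zero (pow_ne_zero 2 heK) hω0
    have hle : v ω ≤ v α := by
      rw [← hv α hα0]
      exact Ideal.sub_mem _ (Ideal.pow_le_pow_right (Nat.le_succ _) haPk)
        ((hv _ he0 _).2 hve.ge)
    have hlt : ¬ v ω + 1 ≤ v α := by
      rw [← hv α hα0]
      intro h
      have h1 : (e : 𝓞 K) ^ 2 * ω ∈ P ^ (v ω + 1) := by
        have : (e : 𝓞 K) ^ 2 * ω = a - α := by rw [hα]; ring
        rw [this]; exact Ideal.sub_mem _ haPk h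
      have := (hv _ he0 _).1 h1
      omega
    rw [Nat.even_iff]
    omega
  refine ⟨J, hJ, fun h0 => ?_⟩
  rw [← map_pow, ClassGroup.mk0_eq_one_iff]
  exact ⟨α, by simpa using hJ.symm⟩
end

section
/- Let m be a cubefree integer with m ≢ 0, ±1 (mod 9), not a perfect cube. Let P, Q be affine rational points on E_m such that P + Q (in the group law) is also affine. Write the x-coordinates of P, Q and P + Q as a/e², c/f², g/h² respectively, with coprime integer pairs (a,e), (c,f), (g,h), and let 𝔞, 𝔟, 𝔠 be ideals of O_K with 𝔞² = (a − e²ω)O_K, 𝔟² = (c − f²ω)O_K, 𝔠² = (g − h²ω)O_K. Then in the ideal class group Cl(K) one has [𝔠] = [𝔞]·[𝔟]; consequently the assignment P ↦ [𝔞] (and the point at infinity to the trivial class) defines a group homomorphism κ : E_m(ℚ) → Cl(K)[2]. -/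
open NumberField

/-- The line through `P`, `Q`, `-(P+Q)` evaluated at `ω`. -/
theorem line_identity (m : ℤ) {K : Type*} [Field K] [Algebra ℚ K] (w : K) (hw : w ^ 3 = (m : K))
    (x₁ y₁ x₂ y₂ x₃ y₃ : ℚ)
    (h₁ : (Wm m).Nonsingular x₁ y₁) (h₂ : (Wm m).Nonsingular x₂ y₂)
    (h₃ : (Wm m).Nonsingular x₃ y₃)
    (hPQ : WeierstrassCurve.Affine.Point.some x₁ y₁ h₁ +
      WeierstrassCurve.Affine.Point.some x₂ y₂ h₂ = WeierstrassCurve.Affine.Point.some x₃ y₃ h₃) :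
    ∃ t : K, (algebraMap ℚ K x₁ - w) * (algebraMap ℚ K x₂ - w) * (algebraMap ℚ K x₃ - w)
      = t ^ 2 := by
  by_cases hxy : x₁ = x₂ ∧ y₁ = (Wm m).negY x₂ y₂
  · rw [WeierstrassCurve.Affine.Point.add_of_Y_eq hxy.1 hxy.2] at hPQ
    exact absurd hPQ.symm (WeierstrassCurve.Affine.Point.some_ne_zero _)
  · rw [WeierstrassCurve.Affine.Point.add_some hxy] at hPQ
    have hx := (WeierstrassCurve.Affine.Point.some.inj hPQ).1
    have key := WeierstrassCurve.Affine.addPolynomial_slope h₁.1 h₂.1 hxy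
    rw [hx, WeierstrassCurve.Affine.addPolynomial_eq] at key
    generalize (Wm m).slope x₁ x₂ y₁ y₂ = l at key
    clear hPQ hx
    have key2 := congrArg (Polynomial.aeval w) key
    simp [Cubic.toPoly, Wm] at key2
    refine ⟨algebraMap ℚ K l * (w - algebraMap ℚ K x₁) + algebraMap ℚ K y₁, ?_⟩
    simp only [eq_ratCast] at *
    linear_combination (-1 : K) * key2 - hw

theorem ideal_sq_inj {R : Type*} [CommRing R] [IsDedekindDomain R] {I J : Ideal R}
    (h : I ^ 2 = J ^ 2) : I = J := by
  apply dvd_antisymm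
  · exact (UniqueFactorizationMonoid.pow_dvd_pow_iff_dvd two_ne_zero).1 h.dvd
  · exact (UniqueFactorizationMonoid.pow_dvd_pow_iff_dvd two_ne_zero).1 h.symm.dvd

/-- For cubefree `m ≢ 0, ±1 (mod 9)`: if `P`, `Q` and `P + Q` are affine
rational points on `E_m` with x-coordinates `a/e²`, `c/f²`, `g/k²` in lowest terms, and
`𝔞² = (a − e²ω)`, `𝔟² = (c − f²ω)`, `𝔠² = (g − k²ω)` as ideals of `O_K`, then
`[𝔠] = [𝔞]·[𝔟]` in `Cl(K)`; consequently `P ↦ [𝔞]` defines a homomorphism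
`κ : E_m(ℚ) → Cl(K)[2]`. -/
theorem class_group_homomorphism
    (m : ℤ) (hm : ¬ ∃ k : ℤ, k ^ 3 = m) (hcf : ∀ d : ℤ, d ^ 3 ∣ m → IsUnit d)
    (h9 : (m : ZMod 9) ≠ 0 ∧ (m : ZMod 9) ≠ 1 ∧ (m : ZMod 9) ≠ -1)
    (K : Type*) [Field K] [NumberField K] (hK : Module.finrank ℚ K = 3)
    (ω : 𝓞 K) (hω : ω ^ 3 = (m : 𝓞 K))
    (P Q : (Wm m).Point)
    (x₁ y₁ x₂ y₂ x₃ y₃ : ℚ)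
    (h₁ : (Wm m).Nonsingular x₁ y₁) (h₂ : (Wm m).Nonsingular x₂ y₂)
    (h₃ : (Wm m).Nonsingular x₃ y₃)
    (hP : P = WeierstrassCurve.Affine.Point.some x₁ y₁ h₁)
    (hQ : Q = WeierstrassCurve.Affine.Point.some x₂ y₂ h₂)
    (hPQ : P + Q = WeierstrassCurve.Affine.Point.some x₃ y₃ h₃)
    (a e c f g k : ℤ) (he : e ≠ 0) (hf : f ≠ 0) (hk : k ≠ 0)
    (hx₁ : x₁ = (a : ℚ) / (e : ℚ) ^ 2) (hx₂ : x₂ = (c : ℚ) / (f : ℚ) ^ 2)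
    (hx₃ : x₃ = (g : ℚ) / (k : ℚ) ^ 2)
    (hae : IsCoprime a e) (hcf' : IsCoprime c f) (hgk : IsCoprime g k)
    (𝔞 𝔟 𝔠 : Ideal (𝓞 K))
    (h𝔞 : 𝔞 ^ 2 = Ideal.span {(a : 𝓞 K) - (e : 𝓞 K) ^ 2 * ω})
    (h𝔟 : 𝔟 ^ 2 = Ideal.span {(c : 𝓞 K) - (f : 𝓞 K) ^ 2 * ω})
    (h𝔠 : 𝔠 ^ 2 = Ideal.span {(g : 𝓞 K) - (k : 𝓞 K) ^ 2 * ω})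
    (h𝔞0 : 𝔞 ≠ 0) (h𝔟0 : 𝔟 ≠ 0) (h𝔠0 : 𝔠 ≠ 0) :
    ClassGroup.mk0 ⟨𝔠, mem_nonZeroDivisors_of_ne_zero h𝔠0⟩ =
      ClassGroup.mk0 ⟨𝔞, mem_nonZeroDivisors_of_ne_zero h𝔞0⟩ *
        ClassGroup.mk0 ⟨𝔟, mem_nonZeroDivisors_of_ne_zero h𝔟0⟩ := by
  subst hP hQ
  obtain ⟨t, ht⟩ := line_identity m (ω : K) (by
    have := congrArg (algebraMap (𝓞 K) K) hω
    simpa using this) x₁ y₁ x₂ y₂ x₃ y₃ h₁ h₂ h₃ hPQ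
  have he' : (e : K) ≠ 0 := by exact_mod_cast he
  have hf' : (f : K) ≠ 0 := by exact_mod_cast hf
  have hk' : (k : K) ≠ 0 := by exact_mod_cast hk
  have hs : ((e * f * k : K) * t) ^ 2 = algebraMap (𝓞 K) K
      (((a : 𝓞 K) - (e : 𝓞 K) ^ 2 * ω) * ((c : 𝓞 K) - (f : 𝓞 K) ^ 2 * ω) *
        ((g : 𝓞 K) - (k : 𝓞 K) ^ 2 * ω)) := by
    rw [mul_pow, ← ht, hx₁, hx₂, hx₃]
    simp
    field_simp
  have hint : IsIntegral ℤ ((e * f * k : K) * t) := by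
    apply IsIntegral.of_pow (n := 2) two_pos
    rw [hs]
    exact RingOfIntegers.isIntegral_coe _
  obtain ⟨θ, hθ⟩ : ∃ θ : 𝓞 K, algebraMap (𝓞 K) K θ = (e * f * k : K) * t := ⟨⟨_, hint⟩, rfl⟩
  rw [← hθ, ← map_pow] at hs
  have hs' := RingOfIntegers.coe_injective hs
  have habc : 𝔞 * 𝔟 * 𝔠 = Ideal.span {θ} := by
    apply ideal_sq_inj
    rw [mul_pow, mul_pow, h𝔞, h𝔟, h𝔠, Ideal.span_singleton_pow, hs',
      Ideal.span_singleton_mul_span_singleton, Ideal.span_singleton_mul_span_singleton]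
  have h1 : ClassGroup.mk0 ⟨𝔞, mem_nonZeroDivisors_of_ne_zero h𝔞0⟩ *
        ClassGroup.mk0 ⟨𝔟, mem_nonZeroDivisors_of_ne_zero h𝔟0⟩ *
        ClassGroup.mk0 ⟨𝔠, mem_nonZeroDivisors_of_ne_zero h𝔠0⟩ = 1 := by
    rw [← map_mul, ← map_mul]
    exact (ClassGroup.mk0_eq_one_iff _).2 ⟨⟨θ, habc⟩⟩
  have h2 : ClassGroup.mk0 ⟨𝔠, mem_nonZeroDivisors_of_ne_zero h𝔠0⟩ *
        ClassGroup.mk0 ⟨𝔠, mem_nonZeroDivisors_of_ne_zero h𝔠0⟩ = 1 := by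
    rw [← map_mul]
    exact (ClassGroup.mk0_eq_one_iff _).2 ⟨⟨_, (pow_two 𝔠).symm.trans h𝔠⟩⟩
  exact mul_right_cancel (h2.trans h1.symm)
end

section
/- Let m be a cubefree integer with m ≢ 0, ±1 (mod 9), not a perfect cube, and let b be a nonzero integer. Let (x, y) be a rational point on the curve y² = x³ − mb³ with x = a/e² for coprime integers a and e, and assume gcd(a, b) = 1. Then the ideal (a − be²ω)O_K is the square of an ideal of O_K. -/
open NumberField

open UniqueFactorizationMonoid in
open Classical in
/-- valuation at P -/
noncomputable def vP {R : Type*} [CommRing R] [IsDedekindDomain R] (P : Ideal R) (x : R) : ℕ :=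
  (normalizedFactors (Ideal.span {x})).count P

section
open UniqueFactorizationMonoid
variable {R : Type*} [CommRing R] [IsDedekindDomain R]

theorem vP_mul (P : Ideal R) {x y : R} (hx : x ≠ 0) (hy : y ≠ 0) :
    vP P (x * y) = vP P x + vP P y := by
  classical
  unfold vP
  rw [← Ideal.span_singleton_mul_span_singleton, normalizedFactors_mul (by simpa using hx)
    (by simpa using hy), Multiset.count_add]

theorem vP_pow (P : Ideal R) {x : R} (n : ℕ) :
    vP P (x ^ n) = n * vP P x := by
  classical
  unfold vP
  rw [← Ideal.span_singleton_pow, normalizedFactors_pow, Multiset.count_nsmul]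

theorem le_vP_iff (P : Ideal R) [hP : P.IsPrime] (hP0 : P ≠ ⊥) {x : R} (hx : x ≠ 0) (n : ℕ) :
    n ≤ vP P x ↔ x ∈ P ^ n := by
  classical
  unfold vP
  have hp : Irreducible P := ((Ideal.prime_iff_isPrime hP0).2 hP).irreducible
  have h := emultiplicity_eq_count_normalizedFactors (a := P) (b := Ideal.span {x}) hp
    (by simpa using hx)
  rw [normalize_eq] at h
  rw [← Ideal.dvd_span_singleton, pow_dvd_iff_le_emultiplicity, h]
  simp

theorem vP_zero_iff (P : Ideal R) [hP : P.IsPrime] (hP0 : P ≠ ⊥) {x : R} (hx : x ≠ 0) :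
    vP P x = 0 ↔ x ∉ P := by
  have := le_vP_iff P hP0 hx 1
  rw [pow_one] at this
  rw [← this]; omega

theorem sq_of_even {x : R} (hx : x ≠ 0)
    (h : ∀ P : Ideal R, P.IsPrime → P ≠ ⊥ → x ∈ P → 2 ∣ vP P x) :
    ∃ I : Ideal R, Ideal.span {x} = I ^ 2 := by
  classical
  obtain ⟨s, hs⟩ := Multiset.exists_smul_of_dvd_count (normalizedFactors (Ideal.span {x}))
    (k := 2) (by
      intro P hP
      have hp := prime_of_normalized_factor P hP
      have hd := dvd_of_mem_normalizedFactors hP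
      rw [Ideal.dvd_span_singleton] at hd
      exact h P (Ideal.isPrime_of_prime hp) hp.ne_zero hd)
  refine ⟨s.prod, ?_⟩
  have h0 : Ideal.span {x} ≠ 0 := by simpa using hx
  rw [← Multiset.prod_nsmul, ← hs]
  exact (associated_iff_eq.1 (prod_normalizedFactors h0)).symm

theorem int_gen (P : Ideal R) [hP : P.IsPrime] {m : ℤ} (hm : m ≠ 0) (hmP : (m : R) ∈ P) :
    ∃ p : ℤ, Prime p ∧ ∀ n : ℤ, (n : R) ∈ P ↔ p ∣ n := by
  let Q : Ideal ℤ := P.comap (Int.castRingHom R)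
  have hQ : Q.IsPrime := Ideal.comap_isPrime _ _
  have hmQ : m ∈ Q := by simpa [Q, Ideal.mem_comap] using hmP
  refine ⟨Submodule.IsPrincipal.generator Q, ?_, ?_⟩
  · apply Submodule.IsPrincipal.prime_generator_of_isPrime
    rintro h
    rw [h] at hmQ
    exact hm (by simpa using hmQ)
  · intro n
    rw [← Submodule.IsPrincipal.mem_iff_generator_dvd]
    simp [Q, Ideal.mem_comap]
end

theorem int_of_pow (q : ℚ) (n : ℕ) (hn : 0 < n) (k : ℤ) (h : q ^ n = k) : ∃ c : ℤ, (c : ℚ) = q := by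
  obtain ⟨c, hc⟩ := IsIntegrallyClosed.exists_algebraMap_eq_of_isIntegral_pow (R := ℤ) (K := ℚ)
    (x := q) hn (by rw [h]; exact isIntegral_algebraMap (R := ℤ) (x := k))
  exact ⟨c, by simpa using hc⟩

theorem zmod9 : ∀ (M A B : ZMod 9), A ^ 3 = M * B ^ 3 → 3 * B ≠ 0 → M = 1 ∨ M = -1 ∨ 3 * A = 0 := by
  decide

/-- For cubefree `m ≢ 0, ±1 (mod 9)`, `b ≠ 0`, and a rational point
`(x,y)` on `y² = x³ − mb³` with `x = a/e²` in lowest terms and `gcd(a,b) = 1`, the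
ideal `(a − be²ω)` of `O_K` is the square of an ideal. -/
theorem twist_ideal_square_of_point
    (m : ℤ) (hm : ¬ ∃ k : ℤ, k ^ 3 = m) (hcf : ∀ d : ℤ, d ^ 3 ∣ m → IsUnit d)
    (h9 : (m : ZMod 9) ≠ 0 ∧ (m : ZMod 9) ≠ 1 ∧ (m : ZMod 9) ≠ -1)
    (K : Type*) [Field K] [NumberField K] (hK : Module.finrank ℚ K = 3)
    (ω : 𝓞 K) (hω : ω ^ 3 = (m : 𝓞 K))
    (b : ℤ) (hb : b ≠ 0)
    (x y : ℚ) (hxy : y ^ 2 = x ^ 3 - (m : ℚ) * (b : ℚ) ^ 3)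
    (a e : ℤ) (he : e ≠ 0) (hx : x = (a : ℚ) / (e : ℚ) ^ 2)
    (hae : IsCoprime a e) (hab : IsCoprime a b) :
    ∃ 𝔞 : Ideal (𝓞 K),
      Ideal.span {(a : 𝓞 K) - (b : 𝓞 K) * (e : 𝓞 K) ^ 2 * ω} = 𝔞 ^ 2 := by
  have hm0 : m ≠ 0 := by rintro rfl; exact hm ⟨0, by norm_num⟩
  have heq : (e : ℚ) ≠ 0 := by exact_mod_cast he
  have hbq : (b : ℚ) ≠ 0 := by exact_mod_cast hb
  have hyc : (y * e ^ 3) ^ 2 = ((a ^ 3 - m * b ^ 3 * e ^ 6 : ℤ) : ℚ) := by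
    push_cast
    rw [mul_pow, hxy, hx]; field_simp
  obtain ⟨c, hc⟩ := int_of_pow _ 2 (by norm_num) _ hyc
  have hcc : c ^ 2 = a ^ 3 - m * b ^ 3 * e ^ 6 := by
    rw [← hc] at hyc; exact_mod_cast hyc
  clear hc hyc hxy hx
  have hc0 : c ≠ 0 := by
    rintro rfl
    have h1 : ((a : ℚ) / (b * e ^ 2)) ^ 3 = m := by
      have : (a : ℚ) ^ 3 = m * b ^ 3 * e ^ 6 := by
        have : a ^ 3 = m * b ^ 3 * e ^ 6 := by linarith
        exact_mod_cast this
      rw [div_pow, this]; field_simp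
    obtain ⟨k, hk⟩ := int_of_pow _ 3 (by norm_num) _ h1
    rw [← hk] at h1
    exact hm ⟨k, by exact_mod_cast h1⟩
  set α : 𝓞 K := (a : 𝓞 K) - (b : 𝓞 K) * (e : 𝓞 K) ^ 2 * ω with hα
  set β : 𝓞 K := (b : 𝓞 K) * (e : 𝓞 K) ^ 2 * ω with hβ
  set γ : 𝓞 K := (a : 𝓞 K) ^ 2 + a * β + β ^ 2 with hγ
  have hαγ : α * γ = (c : 𝓞 K) ^ 2 := by
    have h2 : (c : 𝓞 K) ^ 2 = a ^ 3 - m * b ^ 3 * e ^ 6 := by exact_mod_cast congrArg (Int.cast (R := 𝓞 K)) hcc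
    rw [h2, ← hω, hα, hγ, hβ]; ring
  have hcK : (c : 𝓞 K) ≠ 0 := by exact_mod_cast hc0
  have hα0 : α ≠ 0 := by
    intro h; rw [h, zero_mul] at hαγ; exact pow_ne_zero 2 hcK hαγ.symm
  have hγ0 : γ ≠ 0 := by
    intro h; rw [h, mul_zero] at hαγ; exact pow_ne_zero 2 hcK hαγ.symm
  have hω0 : ω ≠ 0 := by
    rintro rfl
    rw [zero_pow (by norm_num)] at hω
    exact hm0 (by exact_mod_cast hω.symm)
  apply sq_of_even hα0
  intro P hP hP0 hαP
  have hsum : vP P α + vP P γ = 2 * vP P (c : 𝓞 K) := by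
    rw [← vP_mul P hα0 hγ0, hαγ, vP_pow]
  have hcop : ∀ s t : ℤ, IsCoprime s t → (s : 𝓞 K) ∈ P → (t : 𝓞 K) ∈ P → False := by
    rintro s t ⟨u, v, huv⟩ hs ht
    apply hP.ne_top
    rw [Ideal.eq_top_iff_one]
    have h1 : (1 : 𝓞 K) = u * s + v * t := by exact_mod_cast congrArg (Int.cast (R := 𝓞 K)) huv.symm
    rw [h1]
    exact P.add_mem (P.mul_mem_left _ hs) (P.mul_mem_left _ ht)
  have haβ : (a : 𝓞 K) ∈ P ↔ β ∈ P := by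
    have : (a : 𝓞 K) = α + β := by rw [hα]; ring
    rw [this]; exact P.add_mem_iff_right hαP
  have hcP : (c : 𝓞 K) ∈ P := by
    apply hP.mem_of_pow_mem 2
    rw [← hαγ]; exact P.mul_mem_right _ hαP
  by_cases haP : (a : 𝓞 K) ∈ P
  · -- ramified case
    have hbP : (b : 𝓞 K) ∉ P := fun h => hcop a b hab haP h
    have heP : (e : 𝓞 K) ∉ P := fun h => hcop a e hae haP h
    have hωP : ω ∈ P := by
      rcases hP.mem_or_mem (haβ.1 haP) with h | h
      · rcases hP.mem_or_mem h with h | h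
        · exact absurd h hbP
        · exact absurd (hP.mem_of_pow_mem _ h) heP
      · exact h
    have hmP : (m : 𝓞 K) ∈ P := by
      rw [← hω]; exact P.pow_mem_of_mem hωP 3 (by norm_num)
    obtain ⟨p, hp, hpP⟩ := int_gen P hm0 hmP
    rw [hpP] at haP hbP heP hcP
    have hp2 : p ^ 2 ∣ m := by
      have h1 : p ^ 2 ∣ m * (b ^ 3 * e ^ 6) := by
        have : m * (b ^ 3 * e ^ 6) = a ^ 3 - c ^ 2 := by rw [hcc]; ring
        rw [this]
        exact dvd_sub ((pow_dvd_pow p (by norm_num)).trans (pow_dvd_pow_of_dvd haP 3))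
          (pow_dvd_pow_of_dvd hcP 2)
      refine IsCoprime.dvd_of_dvd_mul_right ?_ h1
      apply IsCoprime.pow_left
      apply IsCoprime.mul_right
      · exact IsCoprime.pow_right (hp.coprime_iff_not_dvd.2 hbP)
      · exact IsCoprime.pow_right (hp.coprime_iff_not_dvd.2 heP)
    obtain ⟨u, hu⟩ := hp2
    have hpu : ¬ p ∣ u := by
      rintro ⟨t, rfl⟩
      exact hp.not_unit (hcf p ⟨t, by rw [hu]; ring⟩)
    have hu0 : u ≠ 0 := by rintro rfl; simp at hpu
    have hpK : (p : 𝓞 K) ≠ 0 := by exact_mod_cast hp.ne_zero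
    have huK : (u : 𝓞 K) ≠ 0 := by exact_mod_cast hu0
    have hbK : (b : 𝓞 K) ≠ 0 := by exact_mod_cast hb
    have heK : (e : 𝓞 K) ≠ 0 := by exact_mod_cast he
    have e1 : 3 * vP P ω = 2 * vP P (p : 𝓞 K) := by
      rw [← vP_pow, hω, hu]
      push_cast
      rw [vP_mul P (pow_ne_zero 2 hpK) huK, vP_pow, (vP_zero_iff P hP0 huK).2 (by rwa [hpP])]
      rfl
    have e2 : 1 ≤ vP P ω := by rw [le_vP_iff P hP0 hω0, pow_one]; exact hωP
    have hβ0 : β ≠ 0 := mul_ne_zero (mul_ne_zero hbK (pow_ne_zero 2 heK)) hω0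
    have e3 : vP P β = vP P ω := by
      rw [hβ, vP_mul P (mul_ne_zero hbK (pow_ne_zero 2 heK)) hω0,
        vP_mul P hbK (pow_ne_zero 2 heK), vP_pow, (vP_zero_iff P hP0 hbK).2 (by rwa [hpP]),
        (vP_zero_iff P hP0 heK).2 (by rwa [hpP])]
      simp
    have haPn : (a : 𝓞 K) ∈ P ^ (vP P ω + 1) := by
      obtain ⟨t, rfl⟩ := haP
      push_cast
      apply Ideal.mul_mem_right
      rw [← le_vP_iff P hP0 hpK]; omega
    have e4 : vP P α = vP P ω := by
      apply le_antisymm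
      · by_contra hlt
        push Not at hlt
        have h1 : α ∈ P ^ (vP P ω + 1) := (le_vP_iff P hP0 hα0 _).1 hlt
        have h2 : β ∈ P ^ (vP P ω + 1) := by
          have : β = a - α := by rw [hα]; ring
          rw [this]; exact Ideal.sub_mem _ haPn h1
        rw [← le_vP_iff P hP0 hβ0] at h2
        omega
      · rw [le_vP_iff P hP0 hα0]
        exact Ideal.sub_mem _ (Ideal.pow_le_pow_right (Nat.le_succ _) haPn)
          ((le_vP_iff P hP0 hβ0 _).1 e3.ge)
    omega
  · by_cases hγP : γ ∈ P
    · exfalso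
      have h3 : (3 : 𝓞 K) ∈ P := by
        have h : (3 : 𝓞 K) * (a : 𝓞 K) ^ 2 ∈ P := by
          have : (3 : 𝓞 K) * (a : 𝓞 K) ^ 2 = γ + α * (2 * a + β) := by
            rw [hγ, hα]; ring
          rw [this]
          exact P.add_mem hγP (P.mul_mem_right _ hαP)
        rcases hP.mem_or_mem h with h | h
        · exact h
        · exact absurd (hP.mem_of_pow_mem _ h) haP
      obtain ⟨p, hp, hpP⟩ := int_gen P (m := 3) (by norm_num) (by exact_mod_cast h3)
      have h3p : ∀ n : ℤ, (n : 𝓞 K) ∈ P ↔ 3 ∣ n := by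
        intro n
        rw [hpP]
        have : p ∣ 3 := (hpP 3).1 (by exact_mod_cast h3)
        exact ((hp.associated_of_dvd Int.prime_three this).dvd_iff_dvd_left)
      rw [h3p] at hcP haP
      have hβP : β ∉ P := fun h => haP ((h3p a).1 (haβ.2 h))
      have hbe : ¬ (3 : ℤ) ∣ b * e ^ 2 := by
        intro h
        rw [← h3p] at h
        push_cast at h
        exact hβP (P.mul_mem_right _ h)
      obtain ⟨t, rfl⟩ := hcP
      have hz : (a : ZMod 9) ^ 3 = m * ((b * e ^ 2 : ℤ) : ZMod 9) ^ 3 := by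
        have h := congrArg (Int.cast (R := ZMod 9)) hcc
        push_cast at h ⊢
        have h90 : (9 : ZMod 9) = 0 := rfl
        linear_combination -h + t ^ 2 * h90
      have key : ∀ n : ℤ, ¬ 3 ∣ n → 3 * (n : ZMod 9) ≠ 0 := by
        intro n hn h
        have h' : ((3 * n : ℤ) : ZMod 9) = 0 := by exact_mod_cast h
        rw [ZMod.intCast_zmod_eq_zero_iff_dvd] at h'
        push_cast at h'
        omega
      rcases zmod9 _ _ _ hz (key _ hbe) with h | h | h
      · exact h9.2.1 h
      · exact h9.2.2 h
      · exact key _ haP h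
    · have := (vP_zero_iff P hP0 hγ0).2 hγP
      omega
end

section
/- In the situation of the previous construction (m cubefree with m ≢ 0, ±1 (mod 9), not a perfect cube; b a nonzero integer; P = (r/s², y) a rational point on y² = x³ − mb³ with P ∉ 2E'(ℚ), gcd(r, s) = 1 and gcd(r, b) = 1; α = r − s²bω), assume additionally that s is even and r > 0. Then r ≡ 1 (mod 4), and every prime ideal of O_K (including those above 2) is unramified in the quadratic extension K(√α) of K. -/
open NumberField

/-- The quadratic twist `E' : y² = x³ − mb³` over `ℚ` in Weierstrass form. -/
def Wmb (m b : ℤ) : WeierstrassCurve.Affine ℚ := ⟨0, 0, 0, 0, -((m : ℚ) * (b : ℚ) ^ 3)⟩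


theorem aux_int_root (q : ℚ) (n : ℕ) (hn : 0 < n) (k : ℤ) (h : q ^ n = k) : ∃ t : ℤ, (t : ℚ) = q := by
  have : IsIntegral ℤ (q ^ n) := by
    rw [h]; exact isIntegral_algebraMap (R := ℤ) (A := ℚ) (x := k)
  obtain ⟨t, ht⟩ := IsIntegrallyClosed.exists_algebraMap_eq_of_isIntegral_pow hn this
  exact ⟨t, by simpa using ht⟩

theorem aux_double (m b r s : ℤ) (hb : b ≠ 0) (hs : s ≠ 0) (y : ℚ)
    (hns : (Wmb m b).Nonsingular ((r : ℚ) / (s : ℚ) ^ 2) y)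
    (v w : ℚ) (hw : w ≠ 0)
    (h1 : (s : ℚ) ^ 2 * b * w = v ^ 3 - m * w ^ 3)
    (h2 : 4 * w ^ 2 * r = v ^ 4 + 8 * v * w ^ 3 * m) :
    ∃ Q : (Wmb m b).Point, WeierstrassCurve.Affine.Point.some _ _ hns = 2 • Q := by
  have hb' : (b : ℚ) ≠ 0 := by exact_mod_cast hb
  have hs' : (s : ℚ) ≠ 0 := by exact_mod_cast hs
  have hy0 : (b : ℚ) ^ 2 * s / w ≠ 0 := by positivity
  have hQ : (Wmb m b).Nonsingular (b * v / w) (b ^ 2 * s / w) := by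
    rw [WeierstrassCurve.Affine.nonsingular_iff, WeierstrassCurve.Affine.equation_iff]
    simp only [Wmb]
    refine ⟨?_, Or.inr ?_⟩
    · field_simp
      linear_combination (b:ℚ)^2 * h1
    · intro h
      apply hy0
      linarith
  have hne : (b : ℚ) ^ 2 * s / w ≠ (Wmb m b).negY (b * v / w) (b ^ 2 * s / w) := by
    intro h
    apply hy0
    simp only [WeierstrassCurve.Affine.negY, Wmb] at h
    linarith
  have key : (Wmb m b).addX (b * v / w) (b * v / w)
      ((Wmb m b).slope (b * v / w) (b * v / w) (b ^ 2 * s / w) (b ^ 2 * s / w))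
      = (r : ℚ) / (s : ℚ) ^ 2 := by
    rw [WeierstrassCurve.Affine.slope_of_Y_ne rfl hne]
    simp only [WeierstrassCurve.Affine.negY, WeierstrassCurve.Affine.addX, Wmb]
    have hb2 : (b : ℚ) = (v ^ 3 - m * w ^ 3) / (s ^ 2 * w) := by
      field_simp; linear_combination h1
    have hr2 : (r : ℚ) = (v ^ 4 + 8 * v * w ^ 3 * m) / (4 * w ^ 2) := by
      field_simp; linear_combination h2
    have : ((b : ℚ) ^ 2 * s / w - (-(b ^ 2 * s / w) - 0 * (b * v / w) - 0)) = 2 * (b ^ 2 * s / w) := by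
      ring
    rw [this]
    have : (3 * (b * v / w) ^ 2 + 2 * 0 * (b * v / w) + 0 - 0 * (b ^ 2 * s / w)) / (2 * (b ^ 2 * s / w)) =
      3 * v ^ 2 / (2 * w * s) := by
      field_simp
      ring
    rw [this, hr2, hb2]
    field_simp
    ring
  have hdbl := WeierstrassCurve.Affine.Point.add_self_of_Y_ne (h₁ := hQ) hne
  have hcurve := WeierstrassCurve.Affine.nonsingular_add hQ hQ fun hxy => hne hxy.right
  rcases WeierstrassCurve.Affine.Y_eq_of_X_eq hns.1 hcurve.1 key.symm with h | h
  · refine ⟨.some _ _ hQ, ?_⟩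
    rw [two_nsmul, hdbl]
    simp only [WeierstrassCurve.Affine.Point.some.injEq]
    exact ⟨key.symm, h⟩
  · refine ⟨-.some _ _ hQ, ?_⟩
    rw [two_nsmul, ← neg_add, hdbl, WeierstrassCurve.Affine.Point.neg_some]
    simp only [WeierstrassCurve.Affine.Point.some.injEq]
    exact ⟨key.symm, h⟩

open Polynomial in
theorem aux_coords (m : ℤ) (hm : ¬ ∃ k : ℤ, k ^ 3 = m) (K : Type*) [Field K] [NumberField K]
    (hK : Module.finrank ℚ K = 3) (ω : K) (hω : ω ^ 3 = (m : K)) :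
    (∀ x : K, ∃ u v w : ℚ, x = u + v * ω + w * ω ^ 2) ∧
    (∀ u v w : ℚ, (u : K) + v * ω + w * ω ^ 2 = 0 → u = 0 ∧ v = 0 ∧ w = 0) := by
  have hirr : Irreducible (X ^ 3 - C (m : ℚ)) := by
    apply X_pow_sub_C_irreducible_of_prime Nat.prime_three
    intro q hq
    obtain ⟨t, ht⟩ := aux_int_root q 3 (by norm_num) m hq
    apply hm
    refine ⟨t, ?_⟩
    rw [← ht] at hq
    exact_mod_cast hq
  have hmin : minpoly ℚ ω = X ^ 3 - C (m : ℚ) := by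
    symm
    apply minpoly.eq_of_irreducible_of_monic hirr
    · simp [hω]
    · exact monic_X_pow_sub_C _ (by norm_num)
  have hdeg : (minpoly ℚ ω).natDegree = 3 := by rw [hmin, natDegree_X_pow_sub_C]
  have hli : LinearIndependent ℚ (fun i : Fin 3 => ω ^ (i : ℕ)) := by
    have := linearIndependent_pow (K := ℚ) ω
    rw [hdeg] at this
    exact this
  constructor
  · intro x
    let B := basisOfLinearIndependentOfCardEqFinrank hli (by simp [hK])
    have := B.sum_repr x
    refine ⟨B.repr x 0, B.repr x 1, B.repr x 2, ?_⟩
    conv_lhs => rw [← this]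
    simp [B, Fin.sum_univ_three, Algebra.smul_def]
  · intro u v w h
    rw [Fintype.linearIndependent_iff] at hli
    have := hli ![u, v, w] (by simpa [Fin.sum_univ_three, Algebra.smul_def] using h)
    exact ⟨this 0, this 1, this 2⟩

theorem aux_nonsquare
    (m : ℤ) (hm : ¬ ∃ k : ℤ, k ^ 3 = m)
    (K : Type*) [Field K] [NumberField K] (hK : Module.finrank ℚ K = 3)
    (ω : K) (hω : ω ^ 3 = (m : K))
    (b : ℤ) (hb : b ≠ 0)
    (r s : ℤ) (hs : s ≠ 0) (y : ℚ)
    (hns : (Wmb m b).Nonsingular ((r : ℚ) / (s : ℚ) ^ 2) y)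
    (hP : ∀ Q : (Wmb m b).Point, WeierstrassCurve.Affine.Point.some _ _ hns ≠ 2 • Q)
    (β : K) (hβ : β ^ 2 = (r : K) - (s : K) ^ 2 * (b : K) * ω) : False := by
  obtain ⟨hspan, hli⟩ := aux_coords m hm K hK ω hω
  obtain ⟨u, v, w, rfl⟩ := hspan β
  have h := hli (u ^ 2 + 2 * v * w * m - r) (2 * u * v + m * w ^ 2 + s ^ 2 * b) (v ^ 2 + 2 * u * w) (by
    push_cast
    linear_combination hβ - (2 * v * w + w ^ 2 * ω) * hω)
  obtain ⟨e1, e2, e3⟩ := h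
  have hb' : (b : ℚ) ≠ 0 := by exact_mod_cast hb
  have hs' : (s : ℚ) ≠ 0 := by exact_mod_cast hs
  have hw : w ≠ 0 := by
    rintro rfl
    have hv : v = 0 := by simpa using e3
    subst hv
    simp [hb', hs'] at e2
  obtain ⟨Q, hQ⟩ := aux_double m b r s hb hs y hns v w hw
    (by linear_combination w * e2 - v * e3) (by linear_combination (-4 * w ^ 2) * e1 + (2 * u * w - v ^ 2) * e3)
  exact hP Q hQ

open Polynomial in
theorem aux_unram (K L : Type*) [Field K] [NumberField K] [Field L] [NumberField L] [Algebra K L]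
    (hd : Module.finrank K L = 2) (ξ : L) (A B : 𝓞 K)
    (hξ : ξ ^ 2 + algebraMap K L A * ξ + algebraMap K L B = 0)
    (hnot : ∀ x : K, algebraMap K L x ≠ ξ)
    (𝔭 : Ideal (𝓞 K)) (𝔮 : Ideal (𝓞 L)) (hp : 𝔭.IsPrime) (hp0 : 𝔭 ≠ ⊥) (hq : 𝔮.IsPrime)
    (hpq : Ideal.comap (algebraMap (𝓞 K) (𝓞 L)) 𝔮 = 𝔭)
    (hdisc : A ^ 2 - 4 * B ∉ 𝔭) : Ideal.ramificationIdx' 𝔭 𝔮 = 1 := by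
  set f : (𝓞 K)[X] := X ^ 2 + C A * X + C B with hf
  have hfm : f.Monic := by rw [hf]; monicity!
  have hfd : f.natDegree = 2 := by rw [hf]; compute_degree!
  have hint' : IsIntegral (𝓞 K) ξ := by
    refine ⟨f, hfm, ?_⟩
    rw [hf]
    simp only [eval₂_add, eval₂_mul, eval₂_pow, eval₂_X, eval₂_C]
    exact hξ
  have hint : IsIntegral ℤ ξ := isIntegral_trans (A := 𝓞 K) _ hint'
  obtain ⟨x, hx⟩ : ∃ x : 𝓞 L, (x : L) = ξ := ⟨⟨ξ, hint⟩, rfl⟩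
  have hxA : x ^ 2 + algebraMap (𝓞 K) (𝓞 L) A * x + algebraMap (𝓞 K) (𝓞 L) B = 0 := by
    apply RingOfIntegers.ext
    rw [← hx] at hξ
    simp only [map_add, map_mul, map_pow, map_zero]
    exact hξ
  have hxint : IsIntegral (𝓞 K) x := Algebra.IsIntegral.isIntegral x
  have h2 : 2 ≤ (minpoly (𝓞 K) x).natDegree := by
    rw [minpoly.two_le_natDegree_iff hxint]
    rintro ⟨z, hz⟩
    apply hnot z
    rw [← hx, ← hz]
    rfl
  have hmin : minpoly (𝓞 K) x = f := by
    symm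
    apply Polynomial.eq_of_monic_of_dvd_of_natDegree_le (minpoly.monic hxint) hfm
    · apply minpoly.isIntegrallyClosed_dvd hxint
      simp [hf, hxA]
    · omega
  have hxadj : Algebra.adjoin K {algebraMap (𝓞 L) L x} = ⊤ := by
    have hmem : (2 : ℕ) ≤ (minpoly K ξ).natDegree := by
      rw [minpoly.two_le_natDegree_iff (Algebra.IsIntegral.isIntegral ξ)]
      rintro ⟨z, hz⟩
      exact hnot z hz
    have hle : (minpoly K ξ).natDegree ≤ Module.finrank K L := minpoly.natDegree_le ξ
    have := (Field.primitive_element_iff_minpoly_natDegree_eq K ξ).mpr (by omega)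
    have h3 := congrArg IntermediateField.toSubalgebra this
    rw [IntermediateField.adjoin_simple_toSubalgebra_of_isAlgebraic
      (Algebra.IsAlgebraic.isAlgebraic ξ)] at h3
    change Algebra.adjoin K {(x : L)} = ⊤
    rw [hx, h3]
    rfl
  have hmemd := aeval_derivative_mem_differentIdeal (𝓞 K) K L x hxadj
  rw [hmin] at hmemd
  have hder : aeval x (derivative f) = 2 * x + algebraMap (𝓞 K) (𝓞 L) A := by
    simp [hf, one_add_one_eq_two]
    exact Or.inl (map_ofNat _ 2)
  rw [hder] at hmemd
  have hnm : 2 * x + algebraMap (𝓞 K) (𝓞 L) A ∉ 𝔮 := by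
    intro h
    apply hdisc
    rw [← hpq, Ideal.mem_comap]
    have : algebraMap (𝓞 K) (𝓞 L) (A ^ 2 - 4 * B) =
      (2 * x + algebraMap (𝓞 K) (𝓞 L) A) * (2 * x + algebraMap (𝓞 K) (𝓞 L) A) := by
      simp only [map_sub, map_mul, map_pow, map_ofNat]
      linear_combination (-4) * hxA
    rw [this]
    exact 𝔮.mul_mem_left _ h
  have hnd : ¬ 𝔮 ∣ differentIdeal (𝓞 K) (𝓞 L) := fun h => hnm (Ideal.dvd_iff_le.mp h hmemd)
  have : Algebra.IsUnramifiedAt (𝓞 K) 𝔮 := not_dvd_differentIdeal_iff.mp hnd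
  have : 𝔮.LiesOver 𝔭 := ⟨hpq.symm⟩
  rw [Ideal.ramificationIdx'_eq_ramificationIdx 𝔭 𝔮 hp0]
  exact Ideal.ramificationIdx_eq_one 𝔮 (𝓞 K)

theorem aux_sqrt (K L : Type*) [Field K] [NumberField K] [Field L] [NumberField L] [Algebra K L]
    (hd : Module.finrank K L = 2) (α : K) (θ : L) (hθ : θ ^ 2 = algebraMap K L α)
    (hnsq : ∀ x : K, x ^ 2 ≠ α) (z : K) (δ : 𝓞 K) (hz : z ^ 2 * α = δ)
    (𝔭 : Ideal (𝓞 K)) (𝔮 : Ideal (𝓞 L)) (hp : 𝔭.IsPrime) (hp0 : 𝔭 ≠ ⊥) (hq : 𝔮.IsPrime)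
    (hpq : Ideal.comap (algebraMap (𝓞 K) (𝓞 L)) 𝔮 = 𝔭)
    (hδ : δ ∉ 𝔭) (h2 : (2 : 𝓞 K) ∉ 𝔭) : Ideal.ramificationIdx' 𝔭 𝔮 = 1 := by
  have hz0 : z ≠ 0 := by
    rintro rfl
    apply hδ
    have : δ = 0 := by
      apply RingOfIntegers.ext
      simpa using hz.symm
    rw [this]; exact 𝔭.zero_mem
  refine aux_unram K L hd (algebraMap K L z * θ) 0 (-δ) ?_ ?_ 𝔭 𝔮 hp hp0 hq hpq ?_
  · rw [mul_pow, hθ, ← map_pow, ← map_mul, hz]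
    simp
  · intro x hx
    apply hnsq (x / z)
    apply (algebraMap K L).injective
    have hz1 : algebraMap K L z ≠ 0 := by simpa using hz0
    rw [map_pow, map_div₀, hx, mul_div_cancel_left₀ _ hz1, hθ]
  · intro h
    have h4 : (2 * (2 * δ)) ∈ 𝔭 := by convert h using 1; ring
    rcases hp.mem_or_mem h4 with h | h
    · exact h2 h
    · rcases hp.mem_or_mem h with h | h
      · exact h2 h
      · exact hδ h

theorem aux_prime (K : Type*) [Field K] [NumberField K] (𝔭 : Ideal (𝓞 K)) (hp : 𝔭.IsPrime)
    (k : ℤ) (hk : k ≠ 0) (hmem : (k : 𝓞 K) ∈ 𝔭) :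
    ∃ p : ℤ, Prime p ∧ ∀ n : ℤ, (n : 𝓞 K) ∈ 𝔭 ↔ p ∣ n := by
  obtain ⟨p, hpI⟩ := (IsPrincipalIdealRing.principal (Ideal.comap (algebraMap ℤ (𝓞 K)) 𝔭)).principal
  have hiff : ∀ n : ℤ, (n : 𝓞 K) ∈ 𝔭 ↔ p ∣ n := by
    intro n
    rw [← Ideal.mem_span_singleton]
    change _ ↔ n ∈ Submodule.span ℤ {p}
    rw [← hpI]
    simp [Ideal.mem_comap]
  refine ⟨p, ?_, hiff⟩
  have hp0 : p ≠ 0 := by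
    rintro rfl
    exact hk (zero_dvd_iff.mp ((hiff k).mp hmem))
  rw [← Ideal.span_singleton_prime hp0]
  change Ideal.IsPrime (Submodule.span ℤ {p})
  rw [← hpI]
  exact Ideal.IsPrime.comap _

/-- In the situation of Statement 15, if moreover `s` is even and
`r > 0`, then `r ≡ 1 (mod 4)` and every nonzero prime of `O_K` (including those above
2) is unramified in the quadratic extension `K(√α)` of `K`. -/
theorem quadratic_extension_unramified_everywhere
    (m : ℤ) (hm : ¬ ∃ k : ℤ, k ^ 3 = m) (hcf : ∀ d : ℤ, d ^ 3 ∣ m → IsUnit d)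
    (h9 : (m : ZMod 9) ≠ 0 ∧ (m : ZMod 9) ≠ 1 ∧ (m : ZMod 9) ≠ -1)
    (K : Type*) [Field K] [NumberField K] (hK : Module.finrank ℚ K = 3)
    (ω : 𝓞 K) (hω : ω ^ 3 = (m : 𝓞 K))
    (b : ℤ) (hb : b ≠ 0)
    (P : (Wmb m b).Point) (hP : ∀ Q : (Wmb m b).Point, P ≠ 2 • Q)
    (r s : ℤ) (hs : s ≠ 0) (y : ℚ)
    (hns : (Wmb m b).Nonsingular ((r : ℚ) / (s : ℚ) ^ 2) y)
    (hPeq : P = WeierstrassCurve.Affine.Point.some _ _ hns)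
    (hrs : IsCoprime r s) (hrb : IsCoprime r b)
    (hseven : 2 ∣ s) (hrpos : 0 < r)
    (α : 𝓞 K) (hα : α = (r : 𝓞 K) - (s : 𝓞 K) ^ 2 * (b : 𝓞 K) * ω)
    (L : Type*) [Field L] [NumberField L] [Algebra K L]
    (θ : L) (hθ : θ ^ 2 = algebraMap K L (α : K))
    (hgen : Algebra.adjoin K {θ} = ⊤) :
    r ≡ 1 [ZMOD 4] ∧
    Module.finrank K L = 2 ∧
    ∀ (𝔭 : Ideal (𝓞 K)) (𝔮 : Ideal (𝓞 L)), 𝔭.IsPrime → 𝔭 ≠ ⊥ → 𝔮.IsPrime →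
      Ideal.comap (algebraMap (𝓞 K) (𝓞 L)) 𝔮 = 𝔭 →
      Ideal.ramificationIdx' 𝔭 𝔮 = 1 := by
  have hb' : (b : ℚ) ≠ 0 := by exact_mod_cast hb
  have hs' : (s : ℚ) ≠ 0 := by exact_mod_cast hs
  -- the integer `t` with `t² = r³ - m c³`
  obtain ⟨t, ht⟩ : ∃ t : ℤ, t ^ 2 = r ^ 3 - m * (s ^ 2 * b) ^ 3 := by
    have heq := hns.1
    rw [WeierstrassCurve.Affine.equation_iff] at heq
    simp only [Wmb] at heq
    have h1 : (y * s ^ 3) ^ 2 = ((r ^ 3 - m * (s ^ 2 * b) ^ 3 : ℤ) : ℚ) := by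
      push_cast
      have h2 : y ^ 2 = (r / s ^ 2) ^ 3 - m * b ^ 3 := by linear_combination heq
      rw [mul_pow, h2]
      field_simp
    obtain ⟨t, ht⟩ := aux_int_root _ 2 (by norm_num) _ h1
    refine ⟨t, ?_⟩
    rw [← ht] at h1
    exact_mod_cast h1
  have hcop : IsCoprime r (s ^ 2 * b) := (hrs.pow_right).mul_right hrb
  obtain ⟨s', rfl⟩ := hseven
  have hr4 : r ≡ 1 [ZMOD 4] := by
    have hodd : ¬ (2 : ℤ) ∣ r := by
      intro h2
      have := hrs.isUnit_of_dvd' h2 (Dvd.intro _ rfl)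
      norm_num [Int.isUnit_iff] at this
    have h1 : (t : ZMod 4) ^ 2 = (r : ZMod 4) ^ 3 := by
      have := congrArg (Int.cast : ℤ → ZMod 4) ht
      push_cast at this
      rw [this]
      have h4 : (4 : ZMod 4) = 0 := by decide
      linear_combination (-(m : ZMod 4) * 16 * s' ^ 6 * b ^ 3) * h4
    have h2 : ∀ t r : ZMod 4, t ^ 2 = r ^ 3 → r = 1 ∨ 2 * r = 0 := by decide
    rcases h2 _ _ h1 with h | h
    · exact (ZMod.intCast_eq_intCast_iff r 1 4).mp (by simpa using h)
    · exfalso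
      have : ((2 * r : ℤ) : ZMod 4) = 0 := by push_cast; exact h
      rw [ZMod.intCast_zmod_eq_zero_iff_dvd] at this
      push_cast at this
      omega
  -- nonsquare
  have hωK : (ω : K) ^ 3 = (m : K) := by
    have := congrArg (algebraMap (𝓞 K) K) hω
    simpa using this
  have hαK : (α : K) = (r : K) - ((2 * s' : ℤ) : K) ^ 2 * (b : K) * (ω : K) := by
    rw [hα]
    simp only [map_sub, map_mul, map_pow, map_intCast]
  have hnsq : ∀ x : K, x ^ 2 ≠ (α : K) := by
    intro x hx
    rw [hαK] at hx
    refine aux_nonsquare m hm K hK ω hωK b hb r _ hs y hns ?_ x hx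
    intro Q hQ
    exact hP Q (hPeq.trans hQ)
  have hd : Module.finrank K L = 2 := by
    have hirr := X_pow_sub_C_irreducible_of_prime Nat.prime_two hnsq
    have hmin := minpoly.eq_of_irreducible_of_monic (x := θ) hirr (by simp [hθ])
      (Polynomial.monic_X_pow_sub_C _ (by norm_num))
    have h1 := (Field.primitive_element_iff_minpoly_natDegree_eq K θ).mp (by
      apply IntermediateField.toSubalgebra_injective
      rw [IntermediateField.adjoin_simple_toSubalgebra_of_isAlgebraic
        (Algebra.IsAlgebraic.isAlgebraic θ), hgen]
      rfl)
    rw [← h1, ← hmin, Polynomial.natDegree_X_pow_sub_C]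
  refine ⟨hr4, hd, ?_⟩
  intro 𝔭 𝔮 hp hp0 hq hpq
  have hα0 : (α : K) ≠ 0 := by
    intro h
    exact hnsq 0 (by rw [h]; ring)
  have hθK : ∀ x : K, algebraMap K L x ≠ θ := by
    intro x hx
    apply hnsq x
    apply (algebraMap K L).injective
    rw [map_pow, hx, hθ]
  by_cases h2 : (2 : 𝓞 K) ∈ 𝔭
  · -- primes above 2
    obtain ⟨k, hk⟩ : ∃ k, r = 1 + 4 * k := by
      obtain ⟨k, hk⟩ := hr4.symm.dvd
      exact ⟨k, by linarith⟩
    have h20 : (2 : L) ≠ 0 := two_ne_zero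
    refine aux_unram K L hd ((1 + θ) / 2) (-1) (-(k : 𝓞 K) + (s' : 𝓞 K) ^ 2 * b * ω) ?_ ?_
      𝔭 𝔮 hp hp0 hq hpq ?_
    · have h1 : θ ^ 2 = 1 + 4 * k - 4 * (s' : L) ^ 2 * b * algebraMap K L ω := by
        rw [hθ, hαK, hk]
        push_cast
        simp only [map_sub, map_add, map_mul, map_pow, map_one, map_ofNat, map_intCast]
        ring
      simp only [map_add, map_neg, map_mul, map_pow, map_one, map_intCast]
      field_simp
      linear_combination h1
    · intro x hx
      apply hθK (2 * x - 1)
      rw [map_sub, map_mul, hx, map_one, map_ofNat]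
      field_simp
      ring
    · intro h
      apply hp.ne_top
      rw [Ideal.eq_top_iff_one]
      have h3 : (1 : 𝓞 K) = ((-1) ^ 2 - 4 * (-(k : 𝓞 K) + (s' : 𝓞 K) ^ 2 * b * ω))
          + (2 * (-(k : 𝓞 K) + (s' : 𝓞 K) ^ 2 * b * ω)) * 2 := by ring
      rw [h3]
      exact 𝔭.add_mem h (𝔭.mul_mem_left _ h2)
  by_cases hαp : α ∈ 𝔭
  swap
  · exact aux_sqrt K L hd α θ hθ hnsq 1 α (by simp) 𝔭 𝔮 hp hp0 hq hpq hαp h2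
  generalize hc : (2 * s') ^ 2 * b = c at *
  have hc0 : c ≠ 0 := by
    rw [← hc]
    exact mul_ne_zero (pow_ne_zero _ hs) hb
  have hα1 : α = (r : 𝓞 K) - (c : 𝓞 K) * ω := by
    rw [hα, ← hc]; push_cast; ring
  obtain ⟨α', hα'⟩ : ∃ a : 𝓞 K, a = (r : 𝓞 K) ^ 2 + r * c * ω + c ^ 2 * ω ^ 2 := ⟨_, rfl⟩
  have htO : (t : 𝓞 K) ^ 2 = r ^ 3 - m * c ^ 3 := by exact_mod_cast congrArg (Int.cast : ℤ → 𝓞 K) ht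
  have hprod : α * α' = (t : 𝓞 K) ^ 2 := by
    rw [hα1, hα', htO]
    linear_combination (-(c : 𝓞 K) ^ 3) * hω
  by_cases hα'p : α' ∈ 𝔭
  swap
  · refine aux_sqrt K L hd α θ hθ hnsq ((t : K) / α) α' ?_ 𝔭 𝔮 hp hp0 hq hpq hα'p h2
    have : (α : K) * α' = (t : K) ^ 2 := by
      have := congrArg (algebraMap (𝓞 K) K) hprod
      simpa using this
    field_simp
    linear_combination -this
  have htp : (t : 𝓞 K) ∈ 𝔭 := by
    apply hp.mem_of_pow_mem 2
    rw [← hprod]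
    exact 𝔭.mul_mem_right _ hαp
  have h3r : ((3 : ℤ) : 𝓞 K) * (r : 𝓞 K) ^ 2 ∈ 𝔭 := by
    have : ((3 : ℤ) : 𝓞 K) * (r : 𝓞 K) ^ 2 = α' + (2 * r + c * ω) * α := by
      rw [hα', hα1]; push_cast; ring
    rw [this]
    exact 𝔭.add_mem hα'p (𝔭.mul_mem_left _ hαp)
  obtain ⟨p, hpp, hpiff⟩ := aux_prime K 𝔭 hp (3 * r ^ 2) (by positivity) (by exact_mod_cast h3r)
  have hcp : ¬ p ∣ c := by
    intro hpc
    have h1 : (c : 𝓞 K) ∈ 𝔭 := (hpiff c).mpr hpc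
    have h2 : (r : 𝓞 K) ∈ 𝔭 := by
      have : (r : 𝓞 K) = α + ω * c := by rw [hα1]; ring
      rw [this]
      exact 𝔭.add_mem hαp (𝔭.mul_mem_left _ h1)
    exact hpp.not_isUnit (hcop.isUnit_of_dvd' ((hpiff r).mp h2) hpc)
  have hpt : p ∣ t := (hpiff t).mp htp
  have hpt2 : p ^ 2 ∣ r ^ 3 - m * c ^ 3 := by
    rw [← ht]; exact pow_dvd_pow_of_dvd hpt 2
  by_cases h3 : ((3 : ℤ) : 𝓞 K) ∈ 𝔭
  · exfalso
    have hp3 : Associated p 3 :=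
      (hpp.dvd_prime_iff_associated Int.prime_three).mp ((hpiff 3).mp h3)
    have h3c : ¬ (3 : ℤ) ∣ c := fun h => hcp (hp3.dvd.trans h)
    have h9t : (9 : ℤ) ∣ r ^ 3 - m * c ^ 3 := by
      have := (pow_dvd_pow_of_dvd hp3.symm.dvd 2).trans hpt2
      norm_num at this
      exact this
    have e1 : (r : ZMod 9) ^ 3 = m * (c : ZMod 9) ^ 3 := by
      have := (ZMod.intCast_zmod_eq_zero_iff_dvd (r ^ 3 - m * c ^ 3) 9).mpr (by exact_mod_cast h9t)
      push_cast at this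
      exact sub_eq_zero.mp this
    have e2 : ∀ c r m : ZMod 9, r ^ 3 = m * c ^ 3 → m ≠ 0 ∧ m ≠ 1 ∧ m ≠ -1 → 3 * c = 0 := by
      decide
    have e3 := e2 _ _ _ e1 h9
    have e4 : ((3 * c : ℤ) : ZMod 9) = 0 := by push_cast; exact e3
    rw [ZMod.intCast_zmod_eq_zero_iff_dvd] at e4
    push_cast at e4
    omega
  have hrp : (r : 𝓞 K) ∈ 𝔭 := by
    rcases hp.mem_or_mem h3r with h | h
    · exact absurd h h3
    · exact hp.mem_of_pow_mem 2 h
  have hpr : p ∣ r := (hpiff r).mp hrp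
  have hpm : p ^ 2 ∣ m := by
    have h1 : p ^ 2 ∣ m * c ^ 3 := by
      have h2 : p ^ 2 ∣ r ^ 3 := (pow_dvd_pow p (by norm_num)).trans (pow_dvd_pow_of_dvd hpr 3)
      have := dvd_sub h2 hpt2
      simpa using this
    have h2 : IsCoprime (p ^ 2) (c ^ 3) := by
      apply IsCoprime.pow
      exact (hpp.irreducible.coprime_iff_not_dvd).mpr hcp
    exact h2.dvd_of_dvd_mul_right h1
  obtain ⟨m', hm'⟩ := hpm
  obtain ⟨r', hr'⟩ := hpr
  have hpm' : ¬ p ∣ m' := by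
    rintro ⟨k, hk⟩
    apply hpp.not_isUnit
    apply hcf
    exact ⟨k, by rw [hm', hk]; ring⟩
  have hm'0 : m' ≠ 0 := by
    rintro rfl
    exact hpm' (dvd_zero _)
  have hpK : (p : K) ≠ 0 := by exact_mod_cast hpp.ne_zero
  have hm'K : (m' : K) ≠ 0 := by exact_mod_cast hm'0
  have hωK' : (ω : K) ^ 3 = p ^ 2 * m' := by
    rw [hωK, hm']; push_cast; ring
  obtain ⟨η, hη⟩ : ∃ η : 𝓞 K, (η : K) = (ω : K) ^ 2 / p := by
    have h1 : IsIntegral ℤ ((ω : K) ^ 2 / p) := by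
      apply IsIntegral.of_pow (n := 3) (by norm_num)
      have : ((ω : K) ^ 2 / p) ^ 3 = ((p * m' ^ 2 : ℤ) : K) := by
        push_cast
        field_simp
        linear_combination ((ω : K) ^ 3 + p ^ 2 * m') * hωK'
      rw [this]
      exact isIntegral_algebraMap (R := ℤ) (A := K) (x := p * m' ^ 2)
    exact ⟨⟨_, h1⟩, rfl⟩
  have hη3K : (η : K) ^ 3 = p * m' ^ 2 := by
    rw [hη]
    field_simp
    linear_combination ((ω : K) ^ 3 + p ^ 2 * m') * hωK'
  have hη2K : (η : K) ^ 2 = m' * ω := by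
    rw [hη]
    field_simp
    linear_combination (ω : K) * hωK'
  have hη3 : η ^ 3 = ((p * m' ^ 2 : ℤ) : 𝓞 K) := by
    apply RingOfIntegers.ext
    simp only [map_pow, map_intCast]
    push_cast
    exact hη3K
  have hη0 : (η : K) ≠ 0 := by
    intro h
    rw [h] at hη3K
    have : (p : K) * m' ^ 2 ≠ 0 := mul_ne_zero hpK (pow_ne_zero _ hm'K)
    apply this
    rw [← hη3K]; ring
  have hηp : η ∈ 𝔭 := by
    apply hp.mem_of_pow_mem 3
    rw [hη3]
    exact (hpiff _).mpr (Dvd.intro _ rfl)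
  refine aux_sqrt K L hd α θ hθ hnsq ((m' : K) / η) ((r' : 𝓞 K) * η - ((m' * c : ℤ) : 𝓞 K)) ?_
    𝔭 𝔮 hp hp0 hq hpq ?_ h2
  · have hα2 : (α : K) = (p : K) * r' - c * ω := by
      rw [hα1, hr']
      simp only [map_sub, map_mul, map_intCast]
      push_cast
      ring
    simp only [map_sub, map_mul, map_intCast]
    rw [hα2, div_pow]
    rw [div_mul_eq_mul_div, div_eq_iff (pow_ne_zero 2 hη0)]
    push_cast
    linear_combination (-(r' : K)) * hη3K + ((m' : K) * c) * hη2K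
  · intro h
    have h1 : ((m' * c : ℤ) : 𝓞 K) ∈ 𝔭 := by
      have := 𝔭.sub_mem (𝔭.mul_mem_left (r' : 𝓞 K) hηp) h
      simpa using this
    rcases hpp.dvd_or_dvd ((hpiff _).mp h1) with h | h
    · exact hpm' h
    · exact hcp h
end
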